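/- arXiv:2504.14518 — 2 statements merged into one kernel-verified Lean document; each statement's English description precedes it below -/
import Mathlib

section
/- The integral solutions (X, Y) of the Mordell equation Y^2 = X^3 − 4563 are exactly (X, Y) = (39, 234) and (X, Y) = (39, −234), and the Mordell equation Y^2 = X^3 + 4563 has no integral solutions. -/
/-!
As `4563 = 3³ · 13²`, dividing out the common factors of `X` and `Y` turns `Y² = X³ ± 4563` into
four equations each, which are factored in `ℤ[√3]` and in `ℤ[ω]` respectively. An element coprime
to its conjugate whose norm is a cube is a unit times a cube, and comparing coordinates, mostly
modulo `9`, `13` or `27`, excludes all cases but `X = 39x`, `3z² + 1 = 13x³` of the equation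
`Y² = X³ - 4563`.

There a solution `(x, z)` is encoded in the binary quartic form `(3, 0, -13x, 26z, -169x²)`, whose
invariants `I = 0` and `J = 676` do not depend on the solution. If `x ≠ 1`, Hermite reduction
followed by a finite search makes it equivalent to the form of the solution `(1, 2)`, so that this
form represents `3`, and modulo `9` this becomes the Thue equation
`m⁴ - 234m²b² + 1872mb³ - 4563b⁴ = 1` with `x = 1` if `b = 0`. A solution of it is a unit `m - bf`
in a quartic order whose unit group has rank at most two by Dirichlet's theorem, hence satisfies a
multiplicative relation with two explicit units congruent to `1` modulo `4`. Expanding this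
relation `2`-adically, following Skolem, forces `b = 0`.
-/

/-! ### Rings of quadratic integers -/

theorem isDomain_of_norm {R M : Type*} [CommRing R] [Nontrivial R] [MonoidWithZero M]
    [NoZeroDivisors M] (N : R →* M) (hN₀ : N 0 = 0) (hN : ∀ x, N x = 0 → x = 0) : IsDomain R := by
  have : NoZeroDivisors R := ⟨fun {x y} hxy => by
    have h : N x * N y = 0 := by rw [← map_mul, hxy, hN₀]
    exact (mul_eq_zero.1 h).imp (hN x) (hN y)⟩
  exact NoZeroDivisors.to_isDomain R

theorem isPrincipalIdealRing_of_norm_lt {R : Type*} [CommRing R] (N : R →* ℤ)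
    (hdiv : ∀ x y, y ≠ 0 → ∃ q, |N (x - y * q)| < |N y|) :
    IsPrincipalIdealRing R := by
  refine ⟨fun I => ?_⟩
  by_cases hI : I = ⊥
  · exact hI ▸ inferInstance
  obtain ⟨z, hzI, hz⟩ := Submodule.exists_mem_ne_zero_of_ne_bot hI
  obtain ⟨y, ⟨hyI, hy⟩, hmin⟩ := WellFounded.has_min
    (measure fun x : R => (N x).natAbs).wf {x | x ∈ I ∧ x ≠ 0} ⟨z, hzI, hz⟩
  refine ⟨y, le_antisymm (fun x hx => ?_) ((Ideal.span_singleton_le_iff_mem I).2 hyI)⟩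
  obtain ⟨q, hq⟩ := hdiv x y hy
  have hr : x - y * q = 0 := by
    by_contra hne
    refine hmin _ ⟨I.sub_mem hx (I.mul_mem_right q hyI), hne⟩ ?_
    change (N (x - y * q)).natAbs < (N y).natAbs
    zify
    exact hq
  exact Ideal.mem_span_singleton.2 ⟨q, sub_eq_zero.1 hr⟩

section QuadraticIntegers

open QuadraticAlgebra

namespace QuadraticInt

variable {a b : ℤ}

theorem exists_norm_sub_mul_lt
    (hN : ∀ z : QuadraticAlgebra ℤ a b, norm z = 0 → z = 0)
    (hround : ∀ (z : QuadraticAlgebra ℤ a b) (n : ℤ), n ≠ 0 →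
      ∃ q, |norm (z - (n : QuadraticAlgebra ℤ a b) * q)| < n ^ 2)
    (x y : QuadraticAlgebra ℤ a b) (hy : y ≠ 0) : ∃ q, |norm (x - y * q)| < |norm y| := by
  have hNy : norm y ≠ 0 := mt (hN y) hy
  obtain ⟨q, hq⟩ := hround (x * star y) (norm y) hNy
  refine ⟨q, lt_of_mul_lt_mul_right ?_ (abs_nonneg (norm y))⟩
  have hfactor :
      x * star y - ((norm y : ℤ) : QuadraticAlgebra ℤ a b) * q = (x - y * q) * star y := by
    have := algebraMap_norm_eq_mul_star y
    rw [algebraMap_int_eq, eq_intCast] at this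
    rw [this]; ring
  rwa [hfactor, map_mul, QuadraticAlgebra.norm_star, abs_mul, ← sq_abs (norm y), sq] at hq

theorem isCoprime_star {z : QuadraticAlgebra ℤ a b} (h : IsCoprime (norm z) (trace z)) :
    IsCoprime z (star z) := by
  obtain ⟨r, s, hrs⟩ := h
  have h1 := congrArg (algebraMap ℤ (QuadraticAlgebra ℤ a b)) hrs
  rw [map_add, map_mul, map_mul, algebraMap_norm_eq_mul_star, algebraMap_trace_eq_add_star,
    map_one] at h1
  exact ⟨algebraMap ℤ _ r * star z + algebraMap ℤ _ s, algebraMap ℤ _ s, by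
    rw [← h1]; ring⟩

theorem exists_associated_pow_of_norm_eq_pow [IsDomain (QuadraticAlgebra ℤ a b)]
    [IsPrincipalIdealRing (QuadraticAlgebra ℤ a b)] {z : QuadraticAlgebra ℤ a b} {n : ℤ} {k : ℕ}
    (hz : IsCoprime z (star z)) (hn : norm z = n ^ k) : ∃ w, Associated (w ^ k) z := by
  refine exists_associated_pow_of_mul_eq_pow' hz (c := algebraMap ℤ _ n) ?_
  rw [← algebraMap_norm_eq_mul_star, hn, map_pow]

end QuadraticInt

theorem exists_four_mul_sub_mul_sq_le (t : ℤ) {n : ℤ} (hn : n ≠ 0) :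
    ∃ q : ℤ, 4 * (t - n * q) ^ 2 ≤ n ^ 2 := by
  have h : 4 * (t - n * round (t / n : ℚ) : ℚ) ^ 2 ≤ (n : ℚ) ^ 2 := calc
    _ = (n : ℚ) ^ 2 * (2 * (t / n - round (t / n : ℚ) : ℚ)) ^ 2 := by
      have hn' : (n : ℚ) ≠ 0 := by exact_mod_cast hn
      field_simp; ring
    _ ≤ (n : ℚ) ^ 2 := by
      refine mul_le_of_le_one_right (sq_nonneg _) ((sq_le_one_iff_abs_le_one _).2 ?_)
      rw [abs_mul, abs_two]
      linarith [abs_sub_round (t / n : ℚ)]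
  exact ⟨_, by exact_mod_cast h⟩

/-- The ring `ℤ[ω]` with `ω² + ω + 1 = 0`, whose unique factorisation handles `Y² = X³ - 4563`. -/
abbrev EisensteinInt : Type := QuadraticAlgebra ℤ (-1) (-1)

/-- The ring `ℤ[√3]`, whose unique factorisation handles `Y² = X³ + 4563`. -/
abbrev ZSqrtThree : Type := QuadraticAlgebra ℤ 3 0

namespace EisensteinInt

theorem norm_eq (z : EisensteinInt) : norm z = z.re ^ 2 - z.re * z.im + z.im ^ 2 := by
  rw [norm_def]; ring

theorem norm_nonneg (z : EisensteinInt) : 0 ≤ norm z := by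
  rw [norm_eq]; nlinarith [sq_nonneg (z.re - z.im), sq_nonneg z.re, sq_nonneg z.im]

theorem eq_zero_of_norm_eq_zero (z : EisensteinInt) (h : norm z = 0) : z = 0 := by
  rw [norm_eq] at h
  have him : z.im = 0 := by nlinarith [sq_nonneg (2 * z.re - z.im), sq_nonneg z.im]
  have hre : z.re = 0 := by simpa [him] using h
  exact QuadraticAlgebra.ext hre him

theorem exists_norm_sub_mul_lt (z : EisensteinInt) (n : ℤ) (hn : n ≠ 0) :
    ∃ q, |norm (z - (n : EisensteinInt) * q)| < n ^ 2 := by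
  obtain ⟨q, hq⟩ := exists_four_mul_sub_mul_sq_le z.re hn
  obtain ⟨r, hr⟩ := exists_four_mul_sub_mul_sq_le z.im hn
  have hpos : 0 < n ^ 2 := by positivity
  refine ⟨⟨q, r⟩, ?_⟩
  rw [abs_of_nonneg (norm_nonneg _), norm_eq]
  simp only [zsmul_val, Int.cast_eq, re_sub, im_sub]
  nlinarith [sq_nonneg (z.re - n * q + (z.im - n * r))]

instance : IsDomain EisensteinInt := isDomain_of_norm norm norm_zero eq_zero_of_norm_eq_zero

instance : IsPrincipalIdealRing EisensteinInt :=
  isPrincipalIdealRing_of_norm_lt norm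
    (QuadraticInt.exists_norm_sub_mul_lt eq_zero_of_norm_eq_zero exists_norm_sub_mul_lt)

end EisensteinInt

namespace ZSqrtThree

theorem norm_eq (z : ZSqrtThree) : norm z = z.re ^ 2 - 3 * z.im ^ 2 := by
  rw [norm_def]; ring

theorem eq_zero_of_norm_eq_zero (z : ZSqrtThree) (h : norm z = 0) : z = 0 := by
  rw [norm_eq] at h
  by_cases him : z.im = 0
  · exact QuadraticAlgebra.ext (by simpa [him] using h) him
  · have hsq : IsSquare (3 : ℚ) :=
      ⟨z.re / z.im, by
        have : (z.im : ℚ) ≠ 0 := by exact_mod_cast him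
        have h' : (z.re ^ 2 - 3 * z.im ^ 2 : ℚ) = 0 := by exact_mod_cast h
        field_simp; linarith⟩
    exact absurd hsq (by decide +kernel)

theorem exists_norm_sub_mul_lt (z : ZSqrtThree) (n : ℤ) (hn : n ≠ 0) :
    ∃ q, |norm (z - (n : ZSqrtThree) * q)| < n ^ 2 := by
  obtain ⟨q, hq⟩ := exists_four_mul_sub_mul_sq_le z.re hn
  obtain ⟨r, hr⟩ := exists_four_mul_sub_mul_sq_le z.im hn
  have hpos : 0 < n ^ 2 := by positivity
  refine ⟨⟨q, r⟩, ?_⟩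
  rw [norm_eq, abs_lt]
  simp only [zsmul_val, Int.cast_eq, re_sub, im_sub]
  constructor <;> nlinarith [sq_nonneg (z.re - n * q), sq_nonneg (z.im - n * r)]

instance : IsDomain ZSqrtThree := isDomain_of_norm norm norm_zero eq_zero_of_norm_eq_zero

instance : IsPrincipalIdealRing ZSqrtThree :=
  isPrincipalIdealRing_of_norm_lt norm
    (QuadraticInt.exists_norm_sub_mul_lt eq_zero_of_norm_eq_zero exists_norm_sub_mul_lt)

end ZSqrtThree

namespace EisensteinInt

theorem mk_pow_three (a b : ℤ) : (⟨a, b⟩ : EisensteinInt) ^ 3 =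
    ⟨a ^ 3 + b ^ 3 - 3 * a * b ^ 2, 3 * (a * b * (a - b))⟩ := by
  rw [pow_three, mk_mul_mk, mk_mul_mk]; ext <;> ring

theorem even_im_pow_three (w : EisensteinInt) : Even (w ^ 3).im := by
  have h : Even (w.re * w.im * (w.re - w.im)) := by
    simp only [Int.even_mul, Int.even_sub]; tauto
  rw [show w ^ 3 = (⟨w.re, w.im⟩ : EisensteinInt) ^ 3 from rfl, mk_pow_three]
  exact h.mul_left 3

theorem norm_units (v : EisensteinIntˣ) : norm (v : EisensteinInt) = 1 :=
  (Int.isUnit_iff.1 (isUnit_iff_norm_isUnit.1 v.isUnit)).resolve_right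
    (by linarith [norm_nonneg (v : EisensteinInt)])

theorem units_eq_one_or_neg_one {v : EisensteinIntˣ} (hv : Even (v : EisensteinInt).im) :
    v = 1 ∨ v = -1 := by
  have hnorm := norm_units v
  rw [norm_eq] at hnorm
  obtain ⟨k, hk⟩ := hv
  have him : (v : EisensteinInt).im = 0 := by
    have hk0 : k = 0 := by
      nlinarith [sq_nonneg (2 * (v : EisensteinInt).re - (v : EisensteinInt).im), sq_nonneg k]
    omega
  have hre : (v : EisensteinInt).re ^ 2 = 1 := by simpa [him] using hnorm
  rcases sq_eq_one_iff.1 hre with h | h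
  · exact .inl (Units.ext (QuadraticAlgebra.ext h him))
  · exact .inr (Units.ext (QuadraticAlgebra.ext h (by simpa using him)))

/-- Cubes are rational integers modulo `2`, so a `z ≡ 1` modulo `2` leaves only the units `±1`,
which are themselves cubes. -/
theorem exists_eq_pow_three {z : EisensteinInt} {n : ℤ} (hz : IsCoprime z (star z))
    (hn : norm z = n ^ 3) (hre : Odd z.re) (him : Even z.im) : ∃ w, z = w ^ 3 := by
  obtain ⟨w, v, hv⟩ := QuadraticInt.exists_associated_pow_of_norm_eq_pow hz hn
  have hw := even_im_pow_three w
  have hveven : Even (v : EisensteinInt).im := by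
    simp only [← hv, re_mul, Int.odd_add, Int.odd_mul, Int.even_mul, hw] at hre
    simp only [← hv, im_mul, Int.even_add, Int.even_mul, hw] at him
    grind
  rcases units_eq_one_or_neg_one hveven with rfl | rfl
  · exact ⟨w, by simpa using hv.symm⟩
  · exact ⟨-w, by rw [← hv, Odd.neg_pow (by decide)]; simp⟩

end EisensteinInt

namespace ZSqrtThree

/-- The fundamental solution `2 + √3` of `x² - 3y² = 1`. -/
def fundamentalSolution : Pell.Solution₁ 3 := .mk 2 1 (by norm_num)

theorem isFundamental_fundamentalSolution : Pell.IsFundamental fundamentalSolution :=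
  ⟨by decide, by decide, fun {s} hs => hs⟩

theorem exists_solution_eq_pow_three (s : Pell.Solution₁ 3) : ∃ t : Pell.Solution₁ 3,
    s = t ^ 3 ∨ s = fundamentalSolution * t ^ 3 ∨ s = fundamentalSolution⁻¹ * t ^ 3 := by
  obtain ⟨n, hn⟩ := isFundamental_fundamentalSolution.eq_zpow_or_neg_zpow s
  set ε := fundamentalSolution
  obtain ⟨t, ht⟩ : ∃ t : Pell.Solution₁ 3,
      ε ^ n = t ^ 3 ∨ ε ^ n = ε * t ^ 3 ∨ ε ^ n = ε⁻¹ * t ^ 3 := by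
    obtain ⟨m, rfl | rfl | rfl⟩ : ∃ m, n = m * 3 ∨ n = 1 + m * 3 ∨ n = -1 + m * 3 :=
      ⟨(n + 1) / 3, by omega⟩
    · exact ⟨ε ^ m, .inl (by rw [zpow_mul, zpow_ofNat])⟩
    · exact ⟨ε ^ m, .inr (.inl (by rw [zpow_add, zpow_one, zpow_mul, zpow_ofNat]))⟩
    · exact ⟨ε ^ m, .inr (.inr (by rw [zpow_add, zpow_neg_one, zpow_mul, zpow_ofNat]))⟩
  rcases hn with rfl | rfl
  · exact ⟨t, ht⟩
  · exact ⟨-t, by simpa only [Odd.neg_pow (show Odd 3 by decide), mul_neg, neg_inj] using ht⟩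

/-- The element `x + y√3` attached to a solution of `x² - 3y² = 1`. -/
def ofSolution : Pell.Solution₁ 3 →* ZSqrtThree where
  toFun s := ⟨s.x, s.y⟩
  map_one' := rfl
  map_mul' s t := by
    rw [mk_mul_mk, Pell.Solution₁.x_mul, Pell.Solution₁.y_mul]; ext <;> ring

/-- Minus one is not a norm because it is not a square modulo three. -/
theorem exists_ofSolution_eq (v : ZSqrtThreeˣ) : ∃ s, ofSolution s = v := by
  have hnorm : norm (v : ZSqrtThree) = 1 := by
    refine (Int.isUnit_iff.1 (isUnit_iff_norm_isUnit.1 v.isUnit)).resolve_right fun h => ?_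
    have h3 := congrArg (Int.cast : ℤ → ZMod 3) (norm_eq (v : ZSqrtThree) ▸ h)
    push_cast at h3
    generalize ((v : ZSqrtThree).re : ZMod 3) = r, ((v : ZSqrtThree).im : ZMod 3) = i at h3
    revert r i; decide
  exact ⟨.mk (v : ZSqrtThree).re (v : ZSqrtThree).im (norm_eq (v : ZSqrtThree) ▸ hnorm), rfl⟩

theorem exists_eq_pow_three {z : ZSqrtThree} {n : ℤ} (hz : IsCoprime z (star z))
    (hn : norm z = n ^ 3) :
    ∃ w, z = w ^ 3 ∨ z = ⟨2, 1⟩ * w ^ 3 ∨ z = ⟨2, -1⟩ * w ^ 3 := by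
  obtain ⟨w, v, rfl⟩ := QuadraticInt.exists_associated_pow_of_norm_eq_pow hz hn
  obtain ⟨s, hs⟩ := exists_ofSolution_eq v
  obtain ⟨t, rfl | rfl | rfl⟩ := exists_solution_eq_pow_three s <;>
    refine ⟨w * ofSolution t, ?_⟩ <;> rw [← hs]
  · exact .inl (by rw [map_pow]; ring)
  · exact .inr (.inl (by rw [map_mul, map_pow, mul_pow, mul_left_comm]; rfl))
  · exact .inr (.inr (by rw [map_mul, map_pow, mul_pow, mul_left_comm]; rfl))

/-- The first coordinate of `(a + b√3)³`, over any ring so that it can be reduced modulo `n`. -/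
def cubeRe {R : Type*} [CommRing R] (a b : R) : R := a ^ 3 + 9 * a * b ^ 2

/-- The second coordinate of `(a + b√3)³`, over any ring so that it can be reduced modulo `n`. -/
def cubeIm {R : Type*} [CommRing R] (a b : R) : R := 3 * a ^ 2 * b + 3 * b ^ 3

@[norm_cast]
theorem intCast_cubeRe {R : Type*} [CommRing R] (a b : ℤ) :
    ((cubeRe a b : ℤ) : R) = cubeRe (a : R) b := by
  simp [cubeRe]

@[norm_cast]
theorem intCast_cubeIm {R : Type*} [CommRing R] (a b : ℤ) :
    ((cubeIm a b : ℤ) : R) = cubeIm (a : R) b := by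
  simp [cubeIm]

theorem exists_re_im_eq_of_norm_eq_pow_three {z : ZSqrtThree} {n : ℤ} (hz : IsCoprime z (star z))
    (hn : norm z = n ^ 3) : ∃ a b : ℤ,
      z.re = cubeRe a b ∧ z.im = cubeIm a b ∨
      z.re = 2 * cubeRe a b + 3 * cubeIm a b ∧ z.im = cubeRe a b + 2 * cubeIm a b ∨
      z.re = 2 * cubeRe a b - 3 * cubeIm a b ∧ z.im = 2 * cubeIm a b - cubeRe a b := by
  obtain ⟨⟨a, b⟩, hw⟩ := exists_eq_pow_three hz hn
  refine ⟨a, b, ?_⟩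
  rcases hw with rfl | rfl | rfl <;> rw [pow_three] <;> simp only [mk_mul_mk, cubeRe, cubeIm]
  · exact .inl ⟨by ring, by ring⟩
  · exact .inr (.inl ⟨by ring, by ring⟩)
  · exact .inr (.inr ⟨by ring, by ring⟩)

end ZSqrtThree

namespace QuadraticInt

variable {a b : ℤ}

/-- `(z - star z) ^ 2` is the discriminant of the ring times `z.im ^ 2`. -/
theorem isCoprime_star_of_isCoprime_discr {z : QuadraticAlgebra ℤ a b}
    (h : IsCoprime (norm z) (z.im * (b ^ 2 + 4 * a))) : IsCoprime z (star z) := by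
  refine isCoprime_star ((IsCoprime.pow_right_iff zero_lt_two).1 ?_)
  have htrace : trace z ^ 2 = z.im * (z.im * (b ^ 2 + 4 * a)) + norm z * 4 := by
    rw [trace_def, norm_def]; ring
  rw [htrace]
  exact ((h.of_mul_right_left).mul_right h).add_mul_left_right 4

section Prime

variable [IsDomain (QuadraticAlgebra ℤ a b)] [IsPrincipalIdealRing (QuadraticAlgebra ℤ a b)]
  {π : QuadraticAlgebra ℤ a b}

theorem prime_of_prime_norm (hπ : Prime (norm π)) : Prime π := by
  refine Irreducible.prime ⟨fun h => hπ.not_isUnit (isUnit_iff_norm_isUnit.1 h), fun x y hxy => ?_⟩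
  rw [isUnit_iff_norm_isUnit, isUnit_iff_norm_isUnit]
  exact hπ.irreducible.isUnit_or_isUnit (by rw [hxy, map_mul])

theorem dvd_or_dvd_star_of_prime_norm (hπ : Prime (norm π)) {z : QuadraticAlgebra ℤ a b}
    (hz : norm π ∣ norm z) : π ∣ z ∨ π ∣ star z := by
  refine (prime_of_prime_norm hπ).dvd_or_dvd ?_
  rw [← algebraMap_norm_eq_mul_star]
  refine dvd_trans ⟨star π, ?_⟩ (map_dvd (algebraMap ℤ (QuadraticAlgebra ℤ a b)) hz)
  exact algebraMap_norm_eq_mul_star π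

end Prime

theorem exists_eq_mul_of_norm_eq_mul {π z : QuadraticAlgebra ℤ a b} {n : ℤ}
    (hπ : norm π ≠ 0) (hdvd : π ∣ z) (hz : IsCoprime z (star z)) (hn : norm z = norm π * n) :
    ∃ w, z = π * w ∧ norm w = n ∧ IsCoprime w (star w) := by
  obtain ⟨w, rfl⟩ := hdvd
  rw [map_mul] at hn
  rw [star_mul'] at hz
  exact ⟨w, rfl, mul_left_cancel₀ hπ hn, hz.of_mul_left_right.of_mul_right_right⟩

end QuadraticInt

/-! ### The equations `Y² = X³ ± 4563` -/

theorem sq_dvd_of_pow_three_dvd_sq {p n : ℤ} (hp : Prime p) (h : p ^ 3 ∣ n ^ 2) : p ^ 2 ∣ n := by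
  obtain ⟨m, rfl⟩ := hp.dvd_of_dvd_pow ((dvd_pow_self p three_ne_zero).trans h)
  rw [mul_pow, pow_succ, mul_dvd_mul_iff_left (pow_ne_zero 2 hp.ne_zero)] at h
  rw [sq]
  exact mul_dvd_mul_left p (hp.dvd_of_dvd_pow h)

theorem prime_thirteen : Prime (13 : ℤ) := Int.prime_iff_natAbs_prime.2 (by norm_num)

/-- Since `4563 = 3³ · 13²`, only `3` and `13` can divide both `X` and `Y`. -/
theorem exists_reduced_of_sq_eq {X Y c : ℤ} (h : Y ^ 2 = X ^ 3 + 4563 * c) :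
    (¬ 3 ∣ X ∧ ¬ 13 ∣ X) ∨
    (∃ x y, X = 3 * x ∧ Y = 9 * y ∧ ¬ 13 ∣ x ∧ 3 * y ^ 2 = x ^ 3 + 169 * c) ∨
    (∃ x y, X = 13 * x ∧ Y = 13 * y ∧ ¬ 3 ∣ x ∧ y ^ 2 = 13 * x ^ 3 + 27 * c) ∨
    ∃ x z, X = 39 * x ∧ Y = 117 * z ∧ 3 * z ^ 2 = 13 * x ^ 3 + c := by
  have hthree {y n : ℤ} (hy : y ^ 2 = 27 * n) : ∃ z, y = 9 * z :=
    sq_dvd_of_pow_three_dvd_sq Int.prime_three ⟨n, hy⟩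
  by_cases h13 : 13 ∣ X
  · obtain ⟨x, rfl⟩ := h13
    obtain ⟨y, rfl⟩ : 13 ∣ Y :=
      prime_thirteen.dvd_of_dvd_pow (n := 2) ⟨169 * x ^ 3 + 351 * c, by rw [h]; ring⟩
    have hy : y ^ 2 = 13 * x ^ 3 + 27 * c := by linarith
    by_cases h3 : 3 ∣ x
    · obtain ⟨x, rfl⟩ := h3
      obtain ⟨z, rfl⟩ := hthree (n := 13 * x ^ 3 + c) (by rw [hy]; ring)
      exact .inr (.inr (.inr ⟨x, z, by ring, by ring, by linarith⟩))
    · exact .inr (.inr (.inl ⟨x, y, rfl, rfl, h3, hy⟩))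
  · by_cases h3 : 3 ∣ X
    · obtain ⟨x, rfl⟩ := h3
      obtain ⟨y, rfl⟩ := hthree (n := x ^ 3 + 169 * c) (by rw [h]; ring)
      exact .inr (.inl ⟨x, y, rfl, rfl, fun hx => h13 (hx.mul_left 3), by linarith⟩)
    · exact .inl ⟨h3, h13⟩

theorem odd_of_forall_mul_sq_ne {k m c x y : ℤ} (h : k * y ^ 2 = m * x ^ 3 + c)
    (hc : ∀ r : ZMod 8, k * r ^ 2 ≠ c) : Odd x := by
  rw [← Int.not_even_iff_odd, even_iff_two_dvd]
  rintro ⟨t, rfl⟩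
  have h8 := congrArg (Int.cast : ℤ → ZMod 8) (show k * y ^ 2 = 8 * (m * t ^ 3) + c by rw [h]; ring)
  push_cast at h8
  rw [show (8 : ZMod 8) = 0 from rfl, zero_mul, zero_add] at h8
  exact hc _ h8

theorem isCoprime_three {x : ℤ} (h : ¬ 3 ∣ x) : IsCoprime x 3 :=
  (Int.prime_three.irreducible.coprime_iff_not_dvd.2 h).symm

theorem isCoprime_thirteen {x : ℤ} (h : ¬ 13 ∣ x) : IsCoprime x 13 :=
  (prime_thirteen.irreducible.coprime_iff_not_dvd.2 h).symm

section Plus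

open ZSqrtThree

theorem sq_ne_pow_three_add_of_not_dvd {X : ℤ} (h3 : ¬ 3 ∣ X) (h13 : ¬ 13 ∣ X) (Y : ℤ) :
    Y ^ 2 ≠ X ^ 3 + 4563 := by
  intro h
  have h2 : IsCoprime X 2 := Int.isCoprime_two_right.2 <|
    odd_of_forall_mul_sq_ne (k := 1) (m := 1) (c := 4563)
      (by rw [one_mul, one_mul, h]) (by decide)
  have hnorm : norm (⟨Y, 39⟩ : ZSqrtThree) = X ^ 3 := by rw [ZSqrtThree.norm_eq, h]; ring
  have hcop : IsCoprime (⟨Y, 39⟩ : ZSqrtThree) (star ⟨Y, 39⟩) := by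
    refine QuadraticInt.isCoprime_star_of_isCoprime_discr (hnorm ▸ IsCoprime.pow_left ?_)
    exact ((isCoprime_three h3).mul_right (isCoprime_thirteen h13)).mul_right
      (((isCoprime_three h3).mul_right h2).mul_right h2)
  have hmod : ∀ a b : ZMod 27, cubeRe a b + 2 * cubeIm a b ≠ 39 ∧
      2 * cubeIm a b - cubeRe a b ≠ 39 := by decide +kernel
  obtain ⟨a, b, ⟨-, hb⟩ | ⟨-, hb⟩ | ⟨-, hb⟩⟩ :=
    exists_re_im_eq_of_norm_eq_pow_three hcop hnorm
  · have hb' : b * (a ^ 2 + b ^ 2) = 13 := by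
      simp only [cubeIm] at hb; linarith
    have hpos : 0 < b := by nlinarith [add_nonneg (sq_nonneg a) (sq_nonneg b)]
    have hlt : b < 3 := by nlinarith [sq_nonneg a]
    interval_cases b
    · exact absurd ⟨a, by linarith⟩ (by decide +kernel : ¬ IsSquare (12 : ℤ))
    · omega
  · exact (hmod a b).1 (by exact_mod_cast congrArg (Int.cast : ℤ → ZMod 27) hb.symm)
  · exact (hmod a b).2 (by exact_mod_cast congrArg (Int.cast : ℤ → ZMod 27) hb.symm)

theorem three_mul_sq_ne_pow_three_add {x : ℤ} (h13 : ¬ 13 ∣ x) (y : ℤ) :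
    3 * y ^ 2 ≠ x ^ 3 + 169 := by
  intro h
  have h2 : IsCoprime x 2 := Int.isCoprime_two_right.2 <|
    odd_of_forall_mul_sq_ne (k := 3) (m := 1) (c := 169)
      (by rw [one_mul, h]) (by decide)
  have hnorm : norm (⟨13, y⟩ : ZSqrtThree) = (-x) ^ 3 := by
    rw [ZSqrtThree.norm_eq]; linear_combination -h
  have hcop : IsCoprime (⟨13, y⟩ : ZSqrtThree) (star ⟨13, y⟩) := by
    refine QuadraticInt.isCoprime_star (hnorm ▸ IsCoprime.pow_left ?_)
    rw [trace_def, zero_mul, add_zero]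
    exact (h2.mul_right (isCoprime_thirteen h13)).neg_left
  have hmod : ∀ a b : ZMod 9, cubeRe a b ≠ 13 ∧
      2 * cubeRe a b + 3 * cubeIm a b ≠ 13 ∧
      2 * cubeRe a b - 3 * cubeIm a b ≠ 13 := by decide +kernel
  obtain ⟨a, b, ⟨ha, -⟩ | ⟨ha, -⟩ | ⟨ha, -⟩⟩ :=
    exists_re_im_eq_of_norm_eq_pow_three hcop hnorm
  · exact (hmod a b).1 (by exact_mod_cast congrArg (Int.cast : ℤ → ZMod 9) ha.symm)
  · exact (hmod a b).2.1 (by exact_mod_cast congrArg (Int.cast : ℤ → ZMod 9) ha.symm)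
  · exact (hmod a b).2.2 (by exact_mod_cast congrArg (Int.cast : ℤ → ZMod 9) ha.symm)

theorem norm_four_one : norm (⟨4, 1⟩ : ZSqrtThree) = 13 := by
  rw [ZSqrtThree.norm_eq]; norm_num

theorem sq_ne_thirteen_mul_pow_three_add_of_dvd {x y : ℤ} (h3 : ¬ 3 ∣ x)
    (hdvd : (⟨4, 1⟩ : ZSqrtThree) ∣ ⟨y, 3⟩) : y ^ 2 ≠ 13 * x ^ 3 + 27 := by
  intro h
  have h2 : IsCoprime x 2 := Int.isCoprime_two_right.2 <|
    odd_of_forall_mul_sq_ne (k := 1) (m := 13) (c := 27)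
      (by rw [one_mul, h]) (by decide)
  have hnorm : norm (⟨y, 3⟩ : ZSqrtThree) = 13 * x ^ 3 := by rw [ZSqrtThree.norm_eq, h]; ring
  have hcop : IsCoprime (⟨y, 3⟩ : ZSqrtThree) (star ⟨y, 3⟩) := by
    refine QuadraticInt.isCoprime_star_of_isCoprime_discr (hnorm ▸ IsCoprime.mul_left ?_ ?_)
    · exact (by decide : IsCoprime (13 : ℤ) (3 * 12))
    · have h3 := isCoprime_three h3
      exact (h3.mul_right ((h3.mul_right h2).mul_right h2)).pow_left
  obtain ⟨w, hw, hwnorm, hwcop⟩ := QuadraticInt.exists_eq_mul_of_norm_eq_mul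
    (by rw [norm_four_one]; norm_num) hdvd hcop (norm_four_one ▸ hnorm)
  have him : 3 = 4 * w.im + w.re := by simpa using congrArg im hw
  have hmod₁₃ : ∀ a b : ZMod 13, 4 * cubeIm a b + cubeRe a b ≠ 3 ∧
      4 * (cubeRe a b + 2 * cubeIm a b) + (2 * cubeRe a b + 3 * cubeIm a b) ≠ 3 := by decide +kernel
  have hmod₂₇ : ∀ a b : ZMod 27, 4 * (2 * cubeIm a b - cubeRe a b) +
      (2 * cubeRe a b - 3 * cubeIm a b) ≠ 3 := by decide +kernel
  obtain ⟨a, b, ⟨ha, hb⟩ | ⟨ha, hb⟩ | ⟨ha, hb⟩⟩ :=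
    exists_re_im_eq_of_norm_eq_pow_three hwcop hwnorm <;> rw [ha, hb] at him
  · exact (hmod₁₃ a b).1 (by exact_mod_cast congrArg (Int.cast : ℤ → ZMod 13) him.symm)
  · exact (hmod₁₃ a b).2 (by exact_mod_cast congrArg (Int.cast : ℤ → ZMod 13) him.symm)
  · exact hmod₂₇ a b (by exact_mod_cast congrArg (Int.cast : ℤ → ZMod 27) him.symm)

theorem sq_ne_thirteen_mul_pow_three_add {x : ℤ} (h3 : ¬ 3 ∣ x) (y : ℤ) :
    y ^ 2 ≠ 13 * x ^ 3 + 27 := by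
  intro h
  have hdvd : norm (⟨4, 1⟩ : ZSqrtThree) ∣ norm (⟨y, 3⟩ : ZSqrtThree) :=
    ⟨x ^ 3, by rw [norm_four_one, ZSqrtThree.norm_eq, h]; ring⟩
  rcases QuadraticInt.dvd_or_dvd_star_of_prime_norm (norm_four_one ▸ prime_thirteen) hdvd
    with hy | hy
  · exact sq_ne_thirteen_mul_pow_three_add_of_dvd h3 hy h
  · refine sq_ne_thirteen_mul_pow_three_add_of_dvd (y := -y) h3 ((dvd_neg.2 hy).trans ?_)
      (by rw [neg_sq, h])
    exact dvd_of_eq (QuadraticAlgebra.ext (by simp) (by simp))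

theorem three_mul_sq_ne_thirteen_mul_pow_three_add_of_dvd {z : ℤ}
    (hdvd : (⟨4, 1⟩ : ZSqrtThree) ∣ ⟨1, z⟩) (x : ℤ) : 3 * z ^ 2 ≠ 13 * x ^ 3 + 1 := by
  intro h
  have h2 : IsCoprime x 2 := Int.isCoprime_two_right.2 (odd_of_forall_mul_sq_ne h (by decide))
  have hnorm : norm (⟨1, z⟩ : ZSqrtThree) = 13 * (-x) ^ 3 := by
    rw [ZSqrtThree.norm_eq]; linear_combination -h
  have hcop : IsCoprime (⟨1, z⟩ : ZSqrtThree) (star ⟨1, z⟩) := by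
    refine QuadraticInt.isCoprime_star ?_
    rw [hnorm, trace_def, zero_mul, add_zero, mul_one]
    refine IsCoprime.mul_left ?_ ?_
    · exact (by decide : IsCoprime (13 : ℤ) 2)
    · exact h2.neg_left.pow_left
  obtain ⟨w, hw, hwnorm, hwcop⟩ := QuadraticInt.exists_eq_mul_of_norm_eq_mul
    (by rw [norm_four_one]; norm_num) hdvd hcop (norm_four_one ▸ hnorm)
  have hre : 1 = 4 * w.re + 3 * w.im := by simpa using congrArg re hw
  have hmod : ∀ a b : ZMod 9,
      4 * cubeRe a b + 3 * cubeIm a b ≠ 1 ∧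
      4 * (2 * cubeRe a b + 3 * cubeIm a b) +
        3 * (cubeRe a b + 2 * cubeIm a b) ≠ 1 ∧
      4 * (2 * cubeRe a b - 3 * cubeIm a b) +
        3 * (2 * cubeIm a b - cubeRe a b) ≠ 1 := by decide +kernel
  obtain ⟨a, b, ⟨ha, hb⟩ | ⟨ha, hb⟩ | ⟨ha, hb⟩⟩ :=
    exists_re_im_eq_of_norm_eq_pow_three hwcop hwnorm <;> rw [ha, hb] at hre
  · exact (hmod a b).1 (by exact_mod_cast congrArg (Int.cast : ℤ → ZMod 9) hre.symm)
  · exact (hmod a b).2.1 (by exact_mod_cast congrArg (Int.cast : ℤ → ZMod 9) hre.symm)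
  · exact (hmod a b).2.2 (by exact_mod_cast congrArg (Int.cast : ℤ → ZMod 9) hre.symm)

theorem three_mul_sq_ne_thirteen_mul_pow_three_add (x z : ℤ) : 3 * z ^ 2 ≠ 13 * x ^ 3 + 1 := by
  intro h
  have hdvd : norm (⟨4, 1⟩ : ZSqrtThree) ∣ norm (⟨1, z⟩ : ZSqrtThree) :=
    ⟨-x ^ 3, by rw [norm_four_one, ZSqrtThree.norm_eq]; linear_combination -h⟩
  rcases QuadraticInt.dvd_or_dvd_star_of_prime_norm (norm_four_one ▸ prime_thirteen) hdvd
    with hz | hz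
  · exact three_mul_sq_ne_thirteen_mul_pow_three_add_of_dvd hz x h
  · refine three_mul_sq_ne_thirteen_mul_pow_three_add_of_dvd (z := -z) (hz.trans ?_) x
      (by rw [neg_sq, h])
    exact dvd_of_eq (QuadraticAlgebra.ext (by simp) (by simp))

theorem sq_ne_pow_three_add (X Y : ℤ) : Y ^ 2 ≠ X ^ 3 + 4563 := by
  intro h
  obtain ⟨h3, h13⟩ | ⟨x, y, -, -, h13, hxy⟩ | ⟨x, y, -, -, h3, hxy⟩ | ⟨x, z, -, -, hxz⟩ :=
    exists_reduced_of_sq_eq (X := X) (Y := Y) (c := 1) h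
  · exact sq_ne_pow_three_add_of_not_dvd h3 h13 Y h
  · exact three_mul_sq_ne_pow_three_add h13 y hxy
  · exact sq_ne_thirteen_mul_pow_three_add h3 y hxy
  · exact three_mul_sq_ne_thirteen_mul_pow_three_add x z hxz

end Plus

section Minus

open EisensteinInt

theorem sq_ne_pow_three_sub_of_not_dvd {X : ℤ} (h3 : ¬ 3 ∣ X) (h13 : ¬ 13 ∣ X) (Y : ℤ) :
    Y ^ 2 ≠ X ^ 3 - 4563 := by
  intro h
  have hX : Odd X := odd_of_forall_mul_sq_ne (k := 1) (m := 1) (c := -4563)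
    (by rw [one_mul, one_mul, h, sub_eq_add_neg]) (by decide)
  have hY : Even Y := by
    obtain ⟨k, hk⟩ := hX.pow (n := 3)
    exact (Int.even_pow' two_ne_zero).1 ⟨k - 2281, by omega⟩
  have hnorm : norm (⟨Y + 39, 78⟩ : EisensteinInt) = X ^ 3 := by
    rw [EisensteinInt.norm_eq]; linear_combination h
  have hcop : IsCoprime (⟨Y + 39, 78⟩ : EisensteinInt) (star ⟨Y + 39, 78⟩) := by
    refine QuadraticInt.isCoprime_star_of_isCoprime_discr (hnorm ▸ IsCoprime.pow_left ?_)
    have h3 := isCoprime_three h3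
    exact (((Int.isCoprime_two_right.2 hX).mul_right h3).mul_right
      (isCoprime_thirteen h13)).mul_right h3.neg_right
  obtain ⟨⟨a, b⟩, hw⟩ :=
    exists_eq_pow_three hcop hnorm (hY.add_odd (by decide)) (by decide : Even (78 : ℤ))
  rw [mk_pow_three] at hw
  have him : a * b * (a - b) = 26 := by
    have := congrArg im hw
    simp only at this
    linarith
  have hmod : ∀ a b : ZMod 9, a * b * (a - b) ≠ 26 := by decide +kernel
  exact hmod a b (by exact_mod_cast congrArg (Int.cast : ℤ → ZMod 9) him)

theorem three_mul_sq_ne_pow_three_sub {x : ℤ} (h13 : ¬ 13 ∣ x) (y : ℤ) :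
    3 * y ^ 2 ≠ x ^ 3 - 169 := by
  intro h
  have hx : Odd x := odd_of_forall_mul_sq_ne (k := 3) (m := 1) (c := -169)
    (by rw [one_mul, h, sub_eq_add_neg]) (by decide)
  have hy : Even y := by
    obtain ⟨k, hk⟩ := hx.pow (n := 3)
    exact (Int.even_pow' two_ne_zero).1 ⟨k - 84 - y ^ 2, by omega⟩
  have hnorm : norm (⟨13 + y, 2 * y⟩ : EisensteinInt) = x ^ 3 := by
    rw [EisensteinInt.norm_eq]; linear_combination h
  have hcop : IsCoprime (⟨13 + y, 2 * y⟩ : EisensteinInt) (star ⟨13 + y, 2 * y⟩) := by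
    refine QuadraticInt.isCoprime_star (hnorm ▸ IsCoprime.pow_left ?_)
    have htrace : trace (⟨13 + y, 2 * y⟩ : EisensteinInt) = 2 * 13 := by rw [trace_def]; ring
    rw [htrace]
    exact (Int.isCoprime_two_right.2 hx).mul_right (isCoprime_thirteen h13)
  obtain ⟨⟨a, b⟩, hw⟩ :=
    exists_eq_pow_three hcop hnorm (Odd.add_even (by decide) hy) (even_two_mul y)
  rw [mk_pow_three] at hw
  have htrace : (2 * a - b) * (a + b) * (a - 2 * b) = 26 := by
    have hre := congrArg re hw
    have him := congrArg im hw
    simp only at hre him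
    linarith
  have hmod : ∀ a b : ZMod 9, (2 * a - b) * (a + b) * (a - 2 * b) ≠ 26 := by decide +kernel
  exact hmod a b (by exact_mod_cast congrArg (Int.cast : ℤ → ZMod 9) htrace)

theorem norm_three_four : norm (⟨3, 4⟩ : EisensteinInt) = 13 := by
  rw [EisensteinInt.norm_eq]; norm_num

theorem sq_ne_thirteen_mul_pow_three_sub_of_dvd {x y : ℤ} (h3 : ¬ 3 ∣ x)
    (hdvd : (⟨3, 4⟩ : EisensteinInt) ∣ ⟨y + 3, 6⟩) : y ^ 2 ≠ 13 * x ^ 3 - 27 := by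
  intro h
  have hx : Odd x := odd_of_forall_mul_sq_ne (k := 1) (m := 13) (c := -27)
    (by rw [one_mul, h, sub_eq_add_neg]) (by decide)
  have hy : Even y := by
    obtain ⟨k, hk⟩ := hx.pow (n := 3)
    exact (Int.even_pow' two_ne_zero).1 ⟨13 * k - 7, by omega⟩
  have hnorm : norm (⟨y + 3, 6⟩ : EisensteinInt) = 13 * x ^ 3 := by
    rw [EisensteinInt.norm_eq]; linear_combination h
  have hcop : IsCoprime (⟨y + 3, 6⟩ : EisensteinInt) (star ⟨y + 3, 6⟩) := by
    refine QuadraticInt.isCoprime_star_of_isCoprime_discr (hnorm ▸ IsCoprime.mul_left ?_ ?_)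
    · exact (by decide : IsCoprime (13 : ℤ) (6 * -3))
    · have h3 := isCoprime_three h3
      exact (((Int.isCoprime_two_right.2 hx).mul_right h3).mul_right h3.neg_right).pow_left
  obtain ⟨w, hw, hwnorm, hwcop⟩ := QuadraticInt.exists_eq_mul_of_norm_eq_mul
    (by rw [norm_three_four]; norm_num) hdvd hcop (norm_three_four ▸ hnorm)
  have hre : y + 3 = 3 * w.re + -(4 * w.im) := by simpa using congrArg re hw
  have him : 6 = 3 * w.im + 4 * w.re + -(4 * w.im) := by simpa using congrArg im hw
  have hwre : Odd w.re := by
    obtain ⟨k, hk⟩ := hy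
    exact Int.odd_iff.2 (by omega)
  obtain ⟨⟨a, b⟩, rfl⟩ := exists_eq_pow_three hwcop hwnorm hwre (Int.even_iff.2 (by omega))
  rw [mk_pow_three] at hre him
  have h3y : 3 ∣ y := by simp only at hre him; omega
  refine h3 (Int.prime_three.dvd_of_dvd_pow (n := 3) ?_)
  have : (3 : ℤ) ∣ y ^ 2 := dvd_pow h3y two_ne_zero
  omega

theorem sq_ne_thirteen_mul_pow_three_sub {x : ℤ} (h3 : ¬ 3 ∣ x) (y : ℤ) :
    y ^ 2 ≠ 13 * x ^ 3 - 27 := by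
  intro h
  have hdvd : norm (⟨3, 4⟩ : EisensteinInt) ∣ norm (⟨y + 3, 6⟩ : EisensteinInt) :=
    ⟨x ^ 3, by rw [norm_three_four, EisensteinInt.norm_eq]; linear_combination h⟩
  rcases QuadraticInt.dvd_or_dvd_star_of_prime_norm (norm_three_four ▸ prime_thirteen) hdvd
    with hy | hy
  · exact sq_ne_thirteen_mul_pow_three_sub_of_dvd h3 hy h
  · refine sq_ne_thirteen_mul_pow_three_sub_of_dvd (y := -y) h3 ((dvd_neg.2 hy).trans ?_)
      (by rw [neg_sq, h])
    exact dvd_of_eq (QuadraticAlgebra.ext (by simp; ring) (by simp))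

theorem exists_three_mul_sq_eq_of_sq_eq_pow_three_sub {X Y : ℤ} (h : Y ^ 2 = X ^ 3 - 4563) :
    ∃ x z, X = 39 * x ∧ 3 * z ^ 2 + 1 = 13 * x ^ 3 := by
  obtain ⟨h3, h13⟩ | ⟨x, y, -, -, h13, hxy⟩ | ⟨x, y, -, -, h3, hxy⟩ | ⟨x, z, hX, -, hxz⟩ :=
    exists_reduced_of_sq_eq (X := X) (Y := Y) (c := -1) (by rw [h]; ring)
  · exact absurd h (sq_ne_pow_three_sub_of_not_dvd h3 h13 Y)
  · exact absurd hxy (three_mul_sq_ne_pow_three_sub h13 y)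
  · exact absurd hxy (sq_ne_thirteen_mul_pow_three_sub h3 y)
  · exact ⟨x, z, hX, by rw [hxz]; ring⟩

end Minus

end QuadraticIntegers

/-! ### Binary quartic forms -/

/-- The binary quartic form `a₀X⁴ + 4a₁X³Y + 6a₂X²Y² + 4a₃XY³ + a₄Y⁴`. The binomial coefficients
keep its invariants and its substitutions integral. -/
structure BinaryQuartic (R : Type*) where
  a₀ : R
  a₁ : R
  a₂ : R
  a₃ : R
  a₄ : R

namespace BinaryQuartic

variable {R : Type*} [CommRing R] (F : BinaryQuartic R)

/-- The value of a binary quartic form. -/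
def eval (x y : R) : R :=
  F.a₀ * x ^ 4 + 4 * F.a₁ * x ^ 3 * y + 6 * F.a₂ * x ^ 2 * y ^ 2 + 4 * F.a₃ * x * y ^ 3 +
    F.a₄ * y ^ 4

/-- The value of the Hessian covariant, normalised to have leading coefficient `a₁² - a₀a₂`. -/
def hessian (x y : R) : R :=
  (F.a₁ * x ^ 2 + 2 * F.a₂ * x * y + F.a₃ * y ^ 2) ^ 2 -
    (F.a₀ * x ^ 2 + 2 * F.a₁ * x * y + F.a₂ * y ^ 2) *
      (F.a₂ * x ^ 2 + 2 * F.a₃ * x * y + F.a₄ * y ^ 2)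

/-- The quadratic invariant of a binary quartic form. -/
def I : R := F.a₀ * F.a₄ - 4 * F.a₁ * F.a₃ + 3 * F.a₂ ^ 2

/-- The cubic invariant of a binary quartic form. -/
def J : R :=
  F.a₀ * F.a₂ * F.a₄ + 2 * F.a₁ * F.a₂ * F.a₃ - F.a₂ ^ 3 - F.a₀ * F.a₃ ^ 2 - F.a₁ ^ 2 * F.a₄

/-- The first polar form: four times it is the derivative of `F` at `(m, b)` along `(n, d)`. -/
def polar (m b n d : R) : R :=
  n * (F.a₀ * m ^ 3 + 3 * F.a₁ * m ^ 2 * b + 3 * F.a₂ * m * b ^ 2 + F.a₃ * b ^ 3) +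
    d * (F.a₁ * m ^ 3 + 3 * F.a₂ * m ^ 2 * b + 3 * F.a₃ * m * b ^ 2 + F.a₄ * b ^ 3)

/-- The second polar form, quadratic in `(m, b)` and in `(n, d)`. -/
def polar₂ (m b n d : R) : R :=
  n ^ 2 * (F.a₀ * m ^ 2 + 2 * F.a₁ * m * b + F.a₂ * b ^ 2) +
    2 * n * d * (F.a₁ * m ^ 2 + 2 * F.a₂ * m * b + F.a₃ * b ^ 2) +
    d ^ 2 * (F.a₂ * m ^ 2 + 2 * F.a₃ * m * b + F.a₄ * b ^ 2)

/-- The form `F(mX + nY, bX + dY)`. -/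
def subst (m b n d : R) : BinaryQuartic R :=
  ⟨F.eval m b, F.polar m b n d, F.polar₂ m b n d, F.polar n d m b, F.eval n d⟩

theorem eval_one_zero : F.eval 1 0 = F.a₀ := by
  simp only [eval]; ring

theorem hessian_one_zero : F.hessian 1 0 = F.a₁ ^ 2 - F.a₀ * F.a₂ := by
  simp only [hessian]; ring

theorem eval_subst (m b n d p q : R) :
    (F.subst m b n d).eval p q = F.eval (m * p + n * q) (b * p + d * q) := by
  simp only [subst, eval, polar, polar₂]; ring

theorem hessian_subst (m b n d p q : R) : (F.subst m b n d).hessian p q =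
    (m * d - n * b) ^ 2 * F.hessian (m * p + n * q) (b * p + d * q) := by
  simp only [subst, hessian, eval, polar, polar₂]; ring

theorem I_subst (m b n d : R) : (F.subst m b n d).I = (m * d - n * b) ^ 4 * F.I := by
  simp only [subst, I, eval, polar, polar₂]; ring

theorem J_subst (m b n d : R) : (F.subst m b n d).J = (m * d - n * b) ^ 6 * F.J := by
  simp only [subst, J, eval, polar, polar₂]; ring

theorem polar_add_mul (m b n d k : R) :
    F.polar m b (n + k * m) (d + k * b) = F.polar m b n d + k * F.eval m b := by
  simp only [polar, eval]; ring

theorem syzygy : (F.a₀ ^ 2 * F.a₃ - 3 * F.a₀ * F.a₁ * F.a₂ + 2 * F.a₁ ^ 3) ^ 2 =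
    4 * (F.a₁ ^ 2 - F.a₀ * F.a₂) ^ 3 - F.I * F.a₀ ^ 2 * (F.a₁ ^ 2 - F.a₀ * F.a₂) -
      F.J * F.a₀ ^ 3 := by
  simp only [I, J]; ring

theorem exists_subst_a₁_lt (F : BinaryQuartic ℤ) {m b n d : ℤ} (hdet : m * d - n * b = 1)
    (h : F.eval m b ≠ 0) : ∃ n d, m * d - n * b = 1 ∧
      0 ≤ (F.subst m b n d).a₁ ∧ (F.subst m b n d).a₁ < |F.eval m b| := by
  set k := -(F.polar m b n d / F.eval m b)
  have hpolar : (F.subst m b (n + k * m) (d + k * b)).a₁ = F.polar m b n d % F.eval m b := by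
    change F.polar m b _ _ = _
    rw [polar_add_mul, Int.emod_def]; ring
  exact ⟨n + k * m, d + k * b, by linear_combination hdet,
    hpolar ▸ Int.emod_nonneg _ h, hpolar ▸ Int.emod_lt_abs _ h⟩

end BinaryQuartic

open UpperHalfPlane ModularGroup in
/-- Hermite's bound for the minimum of a binary quadratic form, applied to the form
`s²(X - tY)² + Y² / s²` of determinant one. -/
theorem exists_mul_sub_mul_eq_one_and_sq_le (t : ℝ) {s : ℝ} (hs : 0 < s) :
    ∃ m b n d : ℤ, m * d - n * b = 1 ∧ 3 * ((s * (m - t * b)) ^ 2 + (b / s) ^ 2) ^ 2 ≤ 4 := by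
  let z : ℍ := ⟨⟨t, 1 / s ^ 2⟩, by positivity⟩
  obtain ⟨g, hg⟩ := exists_smul_mem_fd z
  have him := three_le_four_mul_im_sq_of_mem_fd hg
  refine ⟨g 1 1, -(g 1 0), -(g 0 1), g 0 0, ?_, ?_⟩
  · have hdet := g.det_coe
    rw [Matrix.det_fin_two] at hdet
    linarith
  · set A := ((g 1 1 : ℝ) + t * g 1 0) ^ 2 + (g 1 0 : ℝ) ^ 2 / (s ^ 2) ^ 2 with hA
    have hdenom : Complex.normSq (denom (g : GL (Fin 2) ℝ) z) = A := by
      rw [denom_apply, Complex.normSq_apply]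
      simp only [Fin.isValue, one_div, Complex.add_re, Complex.mul_re, Complex.intCast_re,
        Complex.intCast_im, zero_mul, sub_zero, Complex.add_im, Complex.mul_im, add_zero, A, z]
      ring
    rw [ModularGroup.im_smul_eq_div_normSq, hdenom, show z.im = 1 / s ^ 2 from rfl] at him
    have hA₀ : A ≠ 0 := by rintro h; norm_num [h] at him
    have hform : (s * ((g 1 1 : ℝ) - t * -(g 1 0))) ^ 2 + (-(g 1 0 : ℝ) / s) ^ 2 = s ^ 2 * A := by
      rw [hA]; field_simp; ring
    push_cast
    rw [hform]
    have hinv : (1 / s ^ 2 / A) ^ 2 * (s ^ 2 * A) ^ 2 = 1 := by field_simp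
    nlinarith [sq_nonneg (s ^ 2 * A)]

theorem abs_pow_three_mul_le {u w c : ℝ} (h : 3 * (u ^ 2 + w ^ 2) ^ 2 ≤ c) :
    |u ^ 3 * w| ≤ c / 9 :=
  abs_le.2 ⟨by nlinarith [sq_nonneg (u ^ 2 + 3 / 2 * u * w - 1 / 4 * w ^ 2),
      sq_nonneg (u * w + 3 / 2 * w ^ 2), sq_nonneg (u * w)],
    by nlinarith [sq_nonneg (u ^ 2 - 3 / 2 * u * w - 1 / 4 * w ^ 2),
      sq_nonneg (u * w - 3 / 2 * w ^ 2), sq_nonneg (u * w)]⟩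

/-- The polynomial is the value of the form `realSolutionForm` below in adapted coordinates, with
`κ = δ t³` and `q = 1 / t²`. -/
theorem quartic_bounds {u w κ q : ℝ} (h : 3 * (u ^ 2 + w ^ 2) ^ 2 ≤ 4) (hκ₀ : 0 ≤ κ)
    (hκ : κ ≤ 63 / 20) (hq₀ : 0 ≤ q) (hq : q ≤ 1 / 56) :
    -17 < 64 / 3 * q * u ^ 4 + 32 * (u ^ 3 * w) - 27 / 8 * κ * w ^ 4 - 9 * (κ * q) * (u * w ^ 3) ∧
      64 / 3 * q * u ^ 4 + 32 * (u ^ 3 * w) - 27 / 8 * κ * w ^ 4 - 9 * (κ * q) * (u * w ^ 3) <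
        16 := by
  have huuuw := abs_le.1 (abs_pow_three_mul_le h)
  have huwww := abs_le.1 (abs_pow_three_mul_le (add_comm (u ^ 2) _ ▸ h))
  have hu₀ : 0 ≤ u ^ 4 := by positivity
  have hw₀ : 0 ≤ w ^ 4 := by positivity
  have hu : u ^ 4 ≤ 4 / 3 := by nlinarith [sq_nonneg (u * w)]
  have hκq₀ : 0 ≤ κ * q := mul_nonneg hκ₀ hq₀
  have hκq : κ * q ≤ 63 / 20 * (1 / 56) := mul_le_mul hκ hq hq₀ (by norm_num)
  have hqu : q * u ^ 4 ≤ 1 / 56 * (4 / 3) := mul_le_mul hq hu hu₀ (by norm_num)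
  have hκw : κ * w ^ 4 ≤ 63 / 20 * w ^ 4 := mul_le_mul_of_nonneg_right hκ hw₀
  have hmain : -16 ≤ 32 * (u ^ 3 * w) - 27 / 8 * (63 / 20) * w ^ 4 := by
    nlinarith [sq_nonneg (u ^ 2 + 4 / 3 * u * w)]
  constructor <;> nlinarith [hqu, mul_nonneg hκq₀ hw₀, mul_nonneg hq₀ hu₀, mul_nonneg hκ₀ hw₀]

theorem quartic_hessian_bounds {u w κ q : ℝ} (h : 3 * (u ^ 2 + w ^ 2) ^ 2 ≤ 4) (hκ₀ : 0 ≤ κ)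
    (hκ : κ ≤ 63 / 20) (hq₀ : 0 ≤ q) (hq : q ≤ 1 / 56) :
    |64 * u ^ 4 + 54 * κ * (w ^ 3 * u) + 108 * (κ * q) * (u ^ 2 * w ^ 2) +
      96 * (κ * q ^ 2) * (u ^ 3 * w) + 81 / 16 * (κ * q) ^ 2 * w ^ 4| < 200 := by
  have hu : |u ^ 4| ≤ 4 / 3 := by
    rw [abs_of_nonneg (by positivity)]; nlinarith [sq_nonneg (u * w), sq_nonneg (w ^ 2)]
  have hw : |w ^ 4| ≤ 4 / 3 := by
    rw [abs_of_nonneg (by positivity)]; nlinarith [sq_nonneg (u * w), sq_nonneg (u ^ 2)]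
  have huw : |u ^ 2 * w ^ 2| ≤ 1 / 3 := by
    rw [abs_of_nonneg (by positivity)]; nlinarith [sq_nonneg (u ^ 2 - w ^ 2)]
  have huuuw := abs_pow_three_mul_le h
  have huwww := abs_pow_three_mul_le (add_comm (u ^ 2) _ ▸ h)
  have hmul {k c C x B : ℝ} (hk : 0 ≤ k) (hc₀ : 0 ≤ c) (hc : c ≤ C) (hx : |x| ≤ B) :
      |k * c * x| ≤ k * (C * B) := by
    rw [mul_assoc, abs_mul, abs_of_nonneg hk, abs_mul, abs_of_nonneg hc₀]
    exact mul_le_mul_of_nonneg_left (mul_le_mul hc hx (abs_nonneg x) (hc₀.trans hc)) hk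
  have hκq : κ * q ≤ 63 / 20 * (1 / 56) := by gcongr
  have hκqq : κ * q ^ 2 ≤ 63 / 20 * (1 / 56) ^ 2 := by gcongr
  have hκq₂ : (κ * q) ^ 2 ≤ (63 / 20 * (1 / 56)) ^ 2 := by gcongr
  have h₁ := abs_le.1 (hmul (k := 54) (by norm_num) hκ₀ hκ huwww)
  have h₂ := abs_le.1 (hmul (k := 108) (by norm_num) (by positivity) hκq huw)
  have h₃ := abs_le.1 (hmul (k := 96) (by norm_num) (by positivity) hκqq huuuw)
  have h₄ := abs_le.1 (hmul (k := 81 / 16) (by norm_num) (by positivity) hκq₂ hw)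
  have hu := abs_le.1 hu
  exact abs_lt.2 ⟨by linarith, by linarith⟩

/-- The quartic form attached to a solution of `3z² + 1 = 13x³`: this equation is the syzygy of
the form at `(1, 0)`. -/
def solutionForm (x z : ℤ) : BinaryQuartic ℤ := ⟨3, 0, -13 * x, 26 * z, -169 * x ^ 2⟩

theorem exists_real_parameters {x z : ℤ} (hx : 13 ≤ x) (hz : 0 < z)
    (h : 3 * z ^ 2 + 1 = 13 * x ^ 3) : ∃ t δ : ℝ, 0 < t ∧ 56 ≤ t ^ 2 ∧ 13 * (x : ℝ) = 3 * t ^ 2 ∧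
      13 * (z : ℝ) = 3 * (t ^ 3 - δ) ∧ 0 ≤ δ ∧ δ * t ^ 3 ≤ 63 / 20 := by
  have hx' : (13 : ℝ) ≤ x := by exact_mod_cast hx
  have hz' : (0 : ℝ) < z := by exact_mod_cast hz
  have h' : 3 * (z : ℝ) ^ 2 + 1 = 13 * (x : ℝ) ^ 3 := by exact_mod_cast h
  obtain ⟨t, ht, htx⟩ : ∃ t : ℝ, 0 < t ∧ t ^ 2 = 13 * x / 3 :=
    ⟨√(13 * x / 3), Real.sqrt_pos.2 (by linarith), Real.sq_sqrt (by linarith)⟩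
  have hdiff : (t ^ 3 - 13 * z / 3) * (t ^ 3 + 13 * z / 3) = 169 / 27 := by
    have : t ^ 6 = (13 * x / 3) ^ 3 := by rw [← htx]; ring
    linear_combination this - 169 / 27 * h'
  have hδ : 0 ≤ t ^ 3 - 13 * z / 3 := by
    by_contra! hneg
    nlinarith [mul_pos_of_neg_of_neg hneg (neg_neg_of_pos hz'), pow_pos ht 3]
  refine ⟨t, t ^ 3 - 13 * z / 3, ht, by linarith, by linarith, by ring, hδ, ?_⟩
  have ht3 : 56 ≤ t ^ 3 := by nlinarith
  nlinarith

/-- The real form of `solutionForm x z` in the parameters `13x = 3t²`, `13z = 3(t³ - δ)`. For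
`δ = 0` it is `3(X - tY)³(X + 3tY)`. -/
def realSolutionForm (t δ : ℝ) : BinaryQuartic ℝ :=
  ⟨3, 0, -3 * t ^ 2, 6 * (t ^ 3 - δ), -9 * t ^ 4⟩

theorem realSolutionForm_eval {t s : ℝ} (hs : s ≠ 0) (hst : t = 8 * s ^ 2 / 3) (δ u w : ℝ) :
    (realSolutionForm t δ).eval (t * (w * s) + u / s) (w * s) =
      64 / 3 * (1 / t ^ 2) * u ^ 4 + 32 * (u ^ 3 * w) - 27 / 8 * (δ * t ^ 3) * w ^ 4 -
        9 * (δ * t ^ 3 * (1 / t ^ 2)) * (u * w ^ 3) := by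
  simp only [realSolutionForm, BinaryQuartic.eval, hst]
  field_simp
  ring

theorem realSolutionForm_hessian {t s : ℝ} (hs : s ≠ 0) (hst : t = 8 * s ^ 2 / 3) (δ u w : ℝ) :
    (realSolutionForm t δ).hessian (t * (w * s) + u / s) (w * s) =
      64 * u ^ 4 + 54 * (δ * t ^ 3) * (w ^ 3 * u) +
        108 * (δ * t ^ 3 * (1 / t ^ 2)) * (u ^ 2 * w ^ 2) +
        96 * (δ * t ^ 3 * (1 / t ^ 2) ^ 2) * (u ^ 3 * w) +
        81 / 16 * (δ * t ^ 3 * (1 / t ^ 2)) ^ 2 * w ^ 4 := by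
  simp only [realSolutionForm, BinaryQuartic.hessian, hst]
  field_simp
  ring

theorem realSolutionForm_bounds {t s δ m b : ℝ} (hs : 0 < s) (hst : t = 8 * s ^ 2 / 3)
    (ht : 56 ≤ t ^ 2) (hδ : 0 ≤ δ * t ^ 3) (hδt : δ * t ^ 3 ≤ 63 / 20)
    (hmb : 3 * ((s * (m - t * b)) ^ 2 + (b / s) ^ 2) ^ 2 ≤ 4) :
    -17 < (realSolutionForm t δ).eval m b ∧ (realSolutionForm t δ).eval m b < 16 ∧
      |(realSolutionForm t δ).hessian m b| < 200 := by
  have hb : b = b / s * s := by field_simp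
  have hm : m = t * (b / s * s) + s * (m - t * b) / s := by field_simp; ring
  have hq₀ : 0 ≤ 1 / t ^ 2 := by positivity
  have hq : 1 / t ^ 2 ≤ 1 / 56 := one_div_le_one_div_of_le (by norm_num) ht
  have heval := realSolutionForm_eval hs.ne' hst δ (s * (m - t * b)) (b / s)
  have hhessian := realSolutionForm_hessian hs.ne' hst δ (s * (m - t * b)) (b / s)
  rw [← hm, ← hb] at heval hhessian
  rw [heval, hhessian, ← and_assoc]
  exact ⟨quartic_bounds hmb hδ hδt hq₀ hq, quartic_hessian_bounds hmb hδ hδt hq₀ hq⟩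

theorem exists_eval_lt_hessian_lt {x z : ℤ} (hx : 13 ≤ x) (hz : 0 < z)
    (h : 3 * z ^ 2 + 1 = 13 * x ^ 3) : ∃ m b n d : ℤ, m * d - n * b = 1 ∧
      -17 < (solutionForm x z).eval m b ∧ (solutionForm x z).eval m b < 16 ∧
      |(solutionForm x z).hessian m b| < 200 := by
  obtain ⟨t, δ, ht, ht56, hxt, hzt, hδ, hδt⟩ := exists_real_parameters hx hz h
  obtain ⟨s, hs, hst⟩ : ∃ s : ℝ, 0 < s ∧ t = 8 * s ^ 2 / 3 :=
    ⟨√(3 * t / 8), Real.sqrt_pos.2 (by positivity), by rw [Real.sq_sqrt (by positivity)]; ring⟩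
  obtain ⟨m, b, n, d, hdet, hmb⟩ := exists_mul_sub_mul_eq_one_and_sq_le t hs
  have hx' : (x : ℝ) = 3 * t ^ 2 / 13 := by linarith
  have hz' : (z : ℝ) = 3 * (t ^ 3 - δ) / 13 := by linarith
  have heval : (((solutionForm x z).eval m b : ℤ) : ℝ) = (realSolutionForm t δ).eval m b := by
    simp only [solutionForm, realSolutionForm, BinaryQuartic.eval]
    push_cast
    rw [hx', hz']; ring
  have hhessian :
      (((solutionForm x z).hessian m b : ℤ) : ℝ) = (realSolutionForm t δ).hessian m b := by
    simp only [solutionForm, realSolutionForm, BinaryQuartic.hessian]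
    push_cast
    rw [hx', hz']; ring
  have hbounds := realSolutionForm_bounds hs hst ht56 (by positivity) hδt hmb
  rw [← heval, ← hhessian] at hbounds
  exact ⟨m, b, n, d, hdet, by exact_mod_cast hbounds⟩

/-! ### Skolem's method -/

section TwoAdic

variable {R : Type*} [CommRing R]

theorem eight_dvd_mul_sub {x y a b : R} (hx : 8 ∣ x - (1 + 4 * a)) (hy : 8 ∣ y - (1 + 4 * b)) :
    8 ∣ x * y - (1 + 4 * (a + b)) := by
  obtain ⟨r, hr⟩ := hx
  obtain ⟨s, hs⟩ := hy
  exact ⟨y * r + (1 + 4 * a) * s + 2 * a * b, by linear_combination y * hr + (1 + 4 * a) * hs⟩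

theorem eight_dvd_zpow_sub {E : Rˣ} {A : R} (hE : (E : R) = 1 + 4 * A) (n : ℤ) :
    8 ∣ ((E ^ n : Rˣ) : R) - (1 + 4 * (n * A)) := by
  induction n with
  | zero => simp
  | succ n ih =>
    have := eight_dvd_mul_sub ih (y := (E : R)) (b := A) (by simp [hE])
    rw [zpow_add_one, Units.val_mul]
    convert this using 2
    push_cast; ring
  | pred n ih =>
    rw [← Units.dvd_mul_right (u := E), sub_mul, ← Units.val_mul, zpow_sub_one,
      inv_mul_cancel_right]
    obtain ⟨r, hr⟩ := ih
    refine ⟨r + 2 * (n + 1) * A ^ 2, ?_⟩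
    rw [hE]
    push_cast at hr ⊢
    linear_combination hr

theorem eight_dvd_prod_zpow_sub {ι : Type*} [Fintype ι] {E : ι → Rˣ} {A : ι → R}
    (hE : ∀ i, (E i : R) = 1 + 4 * A i) (n : ι → ℤ) :
    8 ∣ ((∏ i, E i ^ n i : Rˣ) : R) - (1 + 4 * ∑ i, n i * A i) := by
  classical
  induction (Finset.univ : Finset ι) using Finset.induction_on with
  | empty => simp
  | insert i s hi ih =>
    rw [Finset.prod_insert hi, Finset.sum_insert hi, Units.val_mul]
    exact eight_dvd_mul_sub (eight_dvd_zpow_sub (hE i) (n i)) ih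

theorem two_pow_dvd_pow_two_pow_sub {x B : R} (h : 8 ∣ x - (1 + 4 * B)) (s : ℕ) :
    2 ^ (s + 3) ∣ x ^ 2 ^ s - (1 + 2 ^ (s + 2) * B) := by
  induction s with
  | zero => norm_num; exact h
  | succ s ih =>
    obtain ⟨z, hz⟩ := ih
    refine ⟨z + 2 ^ s * (B + 2 * z) ^ 2, ?_⟩
    rw [pow_succ 2 s, pow_mul, sub_eq_iff_eq_add.1 hz]
    ring

theorem two_pow_dvd_sq_sub {y f : R} {c l : ℤ} {e : ℕ} (he : 2 ≤ e)
    (h : 2 ^ (e + 1) ∣ y - (c + 2 ^ e * (l * f))) :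
    2 ^ (e + 2) ∣ y ^ 2 - ((c ^ 2 : ℤ) + 2 ^ (e + 1) * ((c * l : ℤ) * f)) := by
  obtain ⟨z, hz⟩ := h
  obtain ⟨d, rfl⟩ := Nat.exists_eq_add_of_le he
  refine ⟨c * z + 2 ^ d * (l * f + 2 * z) ^ 2, ?_⟩
  rw [sub_eq_iff_eq_add.1 hz]
  push_cast
  ring

theorem exists_two_pow_dvd_pow_two_pow_sub {y f : R} {c l : ℤ} {e : ℕ} (he : 2 ≤ e) (hc : Odd c)
    (hl : Odd l) (h : 2 ^ (e + 1) ∣ y - (c + 2 ^ e * (l * f))) (s : ℕ) :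
    ∃ c l : ℤ, Odd l ∧ 2 ^ (e + s + 1) ∣ y ^ 2 ^ s - (c + 2 ^ (e + s) * (l * f)) := by
  suffices ∃ c l : ℤ, Odd c ∧ Odd l ∧ 2 ^ (e + s + 1) ∣ y ^ 2 ^ s - (c + 2 ^ (e + s) * (l * f)) by
    obtain ⟨c, l, -, h⟩ := this
    exact ⟨c, l, h⟩
  induction s with
  | zero => exact ⟨c, l, hc, hl, by simpa using h⟩
  | succ s ih =>
    obtain ⟨c, l, hc, hl, h⟩ := ih
    refine ⟨c ^ 2, c * l, hc.pow, hc.mul hl, ?_⟩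
    rw [pow_succ 2 s, pow_mul]
    exact two_pow_dvd_sq_sub (he.trans (Nat.le_add_right e s)) h

theorem exists_two_pow_dvd_sub_mul_pow_sub {m b : ℤ} (hm : Odd m) (hb : 4 ∣ b) (hb₀ : b ≠ 0)
    (f : R) {k : ℕ} (hk : k ≠ 0) : ∃ (e : ℕ) (c l : ℤ), Odd l ∧
      2 ^ (e + 3) ∣ (m - b * f) ^ k - (c + 2 ^ (e + 2) * (l * f)) := by
  obtain ⟨a, rfl⟩ := hb
  have hfin : FiniteMultiplicity 2 a :=
    Int.finiteMultiplicity_iff.2 ⟨by decide, right_ne_zero_of_mul hb₀⟩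
  obtain ⟨d, had, hd⟩ := hfin.exists_eq_pow_mul_and_not_dvd
  set g := multiplicity 2 a
  obtain ⟨s, j, hj, rfl⟩ := Nat.exists_eq_two_pow_mul_odd hk
  have hl : Odd (-(j * m ^ (j - 1) * d)) :=
    (((Odd.natCast hj).mul hm.pow).mul (Int.not_even_iff_odd.1 (mt Even.two_dvd hd))).neg
  have hpow : 2 ^ (g + 2 + 1) ∣ (m - (4 * a : ℤ) * f) ^ j -
      ((m ^ j : ℤ) + 2 ^ (g + 2) * ((-(j * m ^ (j - 1) * d) : ℤ) * f)) := by
    obtain ⟨z, hz⟩ := Polynomial.powAddExpansion (m : R) (-((4 * a : ℤ) * f)) j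
    refine ⟨2 ^ (g + 1) * z * d ^ 2 * f ^ 2, ?_⟩
    rw [← sub_eq_add_neg] at hz
    rw [hz, had]
    push_cast
    ring
  obtain ⟨c, l, hl, h⟩ := exists_two_pow_dvd_pow_two_pow_sub (by omega) (hm.pow) hl hpow s
  refine ⟨g + s, c, l, hl, ?_⟩
  rwa [mul_comm (2 ^ s), pow_mul, show g + s + 3 = g + 2 + s + 1 by ring,
    show g + s + 2 = g + 2 + s by ring]

/-- The hypothesis of Skolem's method modulo 2: `f` and the `A i` are linearly independent
modulo 2 and the integers. -/
def IndepModTwo {ι : Type*} [Fintype ι] (f : R) (A : ι → R) : Prop :=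
  ∀ (c k : ℤ) (n : ι → ℤ), (2 : R) ∣ c + k * f + ∑ i, n i * A i → 2 ∣ c ∧ 2 ∣ k ∧ ∀ i, 2 ∣ n i

namespace IndepModTwo

variable {ι : Type*} [Fintype ι] {f : R} {A : ι → R}

theorem two_pow_dvd_of_intCast [IsDomain R] [CharZero R] (hA : IndepModTwo f A) {k : ℕ} {c : ℤ}
    (h : (2 : R) ^ k ∣ c) : 2 ^ k ∣ c := by
  induction k generalizing c with
  | zero => simp
  | succ k ih =>
    obtain ⟨d, rfl⟩ := (hA c 0 0 (by simpa using (dvd_pow_self 2 k.succ_ne_zero).trans h)).1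
    rw [pow_succ', Int.cast_mul, Int.cast_ofNat, mul_dvd_mul_iff_left two_ne_zero] at h
    exact pow_succ' (2 : ℤ) k ▸ mul_dvd_mul_left 2 (ih h)

theorem two_dvd_of_prod_zpow [IsDomain R] [CharZero R] (hA : IndepModTwo f A) {E : ι → Rˣ}
    (hE : ∀ i, (E i : R) = 1 + 4 * A i) {s : ℕ} {n : ι → ℤ} {c l : ℤ}
    (h : (2 : R) ^ (s + 3) ∣ (∏ i, E i ^ (2 ^ s * n i) : Rˣ) - (c + 2 ^ (s + 2) * (l * f))) :
    2 ∣ l ∧ ∀ i, 2 ∣ n i := by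
  have hprod := two_pow_dvd_pow_two_pow_sub (eight_dvd_prod_zpow_sub hE n) s
  rw [← Units.val_pow_eq_pow_val, ← Finset.prod_pow] at hprod
  simp only [← zpow_natCast, ← zpow_mul, mul_comm (n _)] at hprod
  push_cast at hprod
  have hdiff : (2 : R) ^ (s + 3) ∣
      (c - 1 : ℤ) + 2 ^ (s + 2) * (l * f + ∑ i, (-n i : ℤ) * A i) := by
    convert dvd_sub hprod h using 1
    simp only [Int.cast_neg, neg_mul, Finset.sum_neg_distrib]
    push_cast
    ring
  obtain ⟨d, hd⟩ := hA.two_pow_dvd_of_intCast (k := s + 2) (c := c - 1)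
    ((dvd_add_left (dvd_mul_right _ _)).1 ((pow_dvd_pow 2 (Nat.le_succ (s + 2))).trans hdiff))
  rw [hd, Int.cast_mul, Int.cast_pow, Int.cast_ofNat, ← mul_add, pow_succ,
    mul_dvd_mul_iff_left (pow_ne_zero _ two_ne_zero), ← add_assoc] at hdiff
  obtain ⟨-, hl, hn⟩ := hA d l (fun i => -n i) hdiff
  exact ⟨hl, fun i => dvd_neg.1 (hn i)⟩

theorem two_pow_dvd_of_prod_zpow [IsDomain R] [CharZero R] (hA : IndepModTwo f A) {E : ι → Rˣ}
    (hE : ∀ i, (E i : R) = 1 + 4 * A i) {t : ℕ} {n : ι → ℤ} {c l : ℤ}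
    (h : (2 : R) ^ (t + 3) ∣ (∏ i, E i ^ n i : Rˣ) - (c + 2 ^ (t + 2) * (l * f))) :
    2 ∣ l ∧ ∀ i, 2 ^ (t + 1) ∣ n i := by
  have hdvd (s : ℕ) (hs : s ≤ t) (hn : ∀ i, 2 ^ s ∣ n i) :
      2 ∣ (2 ^ (t - s) * l) ∧ ∀ i, 2 ^ (s + 1) ∣ n i := by
    choose n' hn' using hn
    obtain ⟨d, rfl⟩ := Nat.exists_eq_add_of_le hs
    simp only [hn', Nat.add_sub_cancel_left] at h ⊢
    have := hA.two_dvd_of_prod_zpow hE (s := s) (n := n') (c := c) (l := 2 ^ d * l) (by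
      convert (pow_dvd_pow (2 : R) (by omega : s + 3 ≤ s + d + 3)).trans h using 2
      push_cast; ring)
    exact ⟨this.1, fun i => pow_succ (2 : ℤ) s ▸ mul_dvd_mul_left _ (this.2 i)⟩
  have hind (s : ℕ) (hs : s ≤ t) : ∀ i, 2 ^ s ∣ n i := by
    induction s with
    | zero => simp
    | succ s ih => exact (hdvd s (by omega) (ih (by omega))).2
  have := hdvd t le_rfl (hind t le_rfl)
  simpa using this

theorem eq_zero_of_prod_zpow_eq_one [IsDomain R] [CharZero R] (hA : IndepModTwo f A)
    {E : ι → Rˣ} (hE : ∀ i, (E i : R) = 1 + 4 * A i) {n : ι → ℤ} (h : ∏ i, E i ^ n i = 1) :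
    n = 0 := by
  funext i
  by_contra hi
  obtain ⟨t, ht⟩ := pow_unbounded_of_one_lt (n i).natAbs one_lt_two
  have := (hA.two_pow_dvd_of_prod_zpow hE (t := t) (n := n) (c := 1) (l := 0) (by simp [h])).2 i
  have := Int.le_of_dvd (abs_pos.2 hi) ((dvd_abs _ _).2 this)
  zify at ht
  rw [pow_succ] at this
  linarith [abs_nonneg (n i)]

/-- Skolem's method: a power of `m - b f` is an integer plus an odd multiple of `2 ^ e f` modulo
`2 ^ (e + 1)`, which a product of powers of the `E i` never is. -/
theorem eq_zero_of_zpow_mul_prod_zpow_eq_one [IsDomain R] [CharZero R] (hA : IndepModTwo f A)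
    {E : ι → Rˣ} (hE : ∀ i, (E i : R) = 1 + 4 * A i) {m b : ℤ} (hm : Odd m) (hb : 4 ∣ b)
    (hb₀ : b ≠ 0) {V : Rˣ} (hV : (V : R) = m - b * f) {k : ℤ} {n : ι → ℤ}
    (h : V ^ k * ∏ i, E i ^ n i = 1) : k = 0 ∧ n = 0 := by
  have hk : k = 0 := by
    by_contra hk
    wlog hk₀ : 0 ≤ k generalizing k n
    · exact this (k := -k) (n := -n) (by simpa [mul_comm] using congrArg (·⁻¹) h) (by omega)
        (by omega)
    lift k to ℕ using hk₀
    obtain ⟨e, c, l, hl, hcl⟩ :=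
      exists_two_pow_dvd_sub_mul_pow_sub hm hb hb₀ f (Int.natCast_ne_zero.1 hk)
    rw [zpow_natCast] at h
    rw [← hV, ← Units.val_pow_eq_pow_val, eq_inv_of_mul_eq_one_left h,
      ← Finset.prod_inv_distrib] at hcl
    simp only [← zpow_neg] at hcl
    exact Int.not_even_iff_odd.2 hl (even_iff_two_dvd.2 (hA.two_pow_dvd_of_prod_zpow hE hcl).1)
  subst hk
  exact ⟨rfl, hA.eq_zero_of_prod_zpow_eq_one hE (by simpa using h)⟩

end IndepModTwo

end TwoAdic

section DirichletRank

open NumberField NumberField.InfinitePlace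

theorem rank_add_two_le_finrank {K : Type*} [Field K] [NumberField K] {σ : K →+* ℂ}
    (hσ : ¬ ComplexEmbedding.IsReal σ) : Units.rank K + 2 ≤ Module.finrank ℚ K := by
  classical
  have hpos : 0 < nrComplexPlaces K :=
    Fintype.card_pos_iff.2 ⟨⟨InfinitePlace.mk σ, isComplex_mk_iff.2 hσ⟩⟩
  have hadd := card_add_two_mul_card_eq_rank K
  have hcard := card_eq_nrRealPlaces_add_nrComplexPlaces K
  rw [Units.rank]
  omega

theorem exists_prod_zpow_eq_one_of_rank_lt_card {K : Type*} [Field K] [NumberField K]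
    {ι : Type*} [Fintype ι] (hι : Units.rank K < Fintype.card ι) (u : ι → (𝓞 K)ˣ) :
    ∃ n : ι → ℤ, n ≠ 0 ∧ ∏ i, u i ^ n i = 1 := by
  have hdep : ¬ LinearIndependent ℤ fun i => Additive.ofMul (u i) := fun hli => by
    have hle := hli.fintype_card_le_finrank
    rw [Units.finrank_eq] at hle
    exact hle.not_gt hι
  rw [Fintype.not_linearIndependent_iff] at hdep
  obtain ⟨n, hn, i, hi⟩ := hdep
  exact ⟨n, fun h => hi (congrFun h i), hn⟩

theorem exists_prod_zpow_eq_one_of_injective {K R : Type*} [Field K] [NumberField K] [CommRing R]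
    [Algebra.IsIntegral ℤ R] {φ : R →+* K} (hφ : Function.Injective φ) {ι : Type*} [Fintype ι]
    (hι : Units.rank K < Fintype.card ι) (u : ι → Rˣ) :
    ∃ n : ι → ℤ, n ≠ 0 ∧ ∏ i, u i ^ n i = 1 := by
  let ψ : R →+* 𝓞 K := φ.codRestrict (integralClosure ℤ K).toSubring fun x =>
    (Algebra.IsIntegral.isIntegral x).map φ.toIntAlgHom
  have hψ : Function.Injective ψ := fun x y h => hφ (congrArg Subtype.val h)
  obtain ⟨n, hn, h⟩ := exists_prod_zpow_eq_one_of_rank_lt_card hι fun i => Units.map ψ (u i)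
  refine ⟨n, hn, Units.map_injective (f := (ψ : R →* 𝓞 K)) hψ ?_⟩
  simpa only [map_prod, map_zpow, map_one] using h

end DirichletRank

/-! ### The quartic field and its units -/

section DepressedQuartic

open Polynomial

/-- The quartic polynomial `X ^ 4 + p X ^ 2 + q X + r` without cubic term. -/
noncomputable def depressedQuartic {R : Type*} [CommRing R] (p q r : R) : R[X] :=
  X ^ 4 + C p * X ^ 2 + C q * X + C r

namespace depressedQuartic

theorem monic {R : Type*} [CommRing R] (p q r : R) : (depressedQuartic p q r).Monic := by
  nontriviality R
  unfold depressedQuartic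
  monicity!

theorem natDegree {R : Type*} [CommRing R] [Nontrivial R] (p q r : R) :
    (depressedQuartic p q r).natDegree = 4 := by
  unfold depressedQuartic
  compute_degree!

theorem map {R S : Type*} [CommRing R] [CommRing S] (p q r : R) (φ : R →+* S) :
    (depressedQuartic p q r).map φ = depressedQuartic (φ p) (φ q) (φ r) := by
  simp [depressedQuartic]

theorem eval {R : Type*} [CommRing R] (p q r x : R) :
    (depressedQuartic p q r).eval x = x ^ 4 + p * x ^ 2 + q * x + r := by
  simp [depressedQuartic]

theorem exists_eq_of_monic_of_natDegree_eq_two {R : Type*} [CommRing R] {f : R[X]}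
    (hf : f.Monic) (hdeg : f.natDegree = 2) : ∃ a b : R, f = X ^ 2 + C a * X + C b := by
  refine ⟨f.coeff 1, f.coeff 0, ?_⟩
  have hlead : f.coeff 2 = 1 := hdeg ▸ hf
  conv_lhs => rw [f.as_sum_range_C_mul_X_pow, hdeg]
  simp only [Finset.sum_range_succ, Finset.sum_range_zero, hlead, map_one]
  ring

theorem eq_of_mul_eq {R : Type*} [CommRing R] {a b c d p q r : R}
    (h : (X ^ 2 + C a * X + C b) * (X ^ 2 + C d * X + C c) = depressedQuartic p q r) :
    d = -a ∧ b + c - a ^ 2 = p ∧ a * (c - b) = q ∧ b * c = r := by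
  have hcubic :
      (⟨a + d, b + c + a * d - p, a * c + b * d - q, b * c - r⟩ : Cubic R).toPoly = 0 := by
    rw [depressedQuartic] at h
    simp only [Cubic.toPoly, C_add, C_sub, C_mul]
    linear_combination h
  obtain ⟨h₃, h₂, h₁, h₀⟩ := Cubic.mk.inj ((Cubic.toPoly_eq_zero_iff _).1 hcubic)
  obtain rfl := eq_neg_of_add_eq_zero_right h₃
  exact ⟨rfl, by linear_combination h₂, by linear_combination h₁, by linear_combination h₀⟩

theorem irreducible {R : Type*} [CommRing R] [IsDomain R] {p q r : R}
    (hlin : ∀ x, x ^ 4 + p * x ^ 2 + q * x + r ≠ 0)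
    (hquad : ∀ a b c, b + c - a ^ 2 = p → a * (c - b) = q → b * c ≠ r) :
    Irreducible (depressedQuartic p q r) := by
  have hmonic := monic p q r
  have hdeg := natDegree p q r
  refine hmonic.irreducible_iff_natDegree'.2 ⟨fun h => by simp [h] at hdeg,
    fun f g hf hg hfg hmem => ?_⟩
  have hadd : f.natDegree + g.natDegree = 4 := by rw [← hf.natDegree_mul hg, hfg, hdeg]
  rw [hdeg, Finset.mem_Ioc] at hmem
  obtain hg₁ | hg₂ : g.natDegree = 1 ∨ g.natDegree = 2 := by omega
  · have hroot : g.eval (-g.coeff 0) = 0 := by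
      conv_lhs => rw [hg.eq_X_add_C hg₁]
      simp
    exact hlin (-g.coeff 0) (by rw [← eval, ← hfg, eval_mul, hroot, mul_zero])
  · obtain ⟨a, b, rfl⟩ := exists_eq_of_monic_of_natDegree_eq_two hf (by omega)
    obtain ⟨d, c, rfl⟩ := exists_eq_of_monic_of_natDegree_eq_two hg hg₂
    obtain ⟨rfl, h₂, h₁, h₀⟩ := eq_of_mul_eq hfg
    exact hquad a b c h₂ h₁ h₀

theorem exists_eval_eq_prod {K : Type*} [Field K] [IsAlgClosed K] (p q r : K) :
    ∃ x y z w : K, ∀ t,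
      t ^ 4 + p * t ^ 2 + q * t + r = (t - x) * (t - y) * (t - z) * (t - w) := by
  have hsplit := IsAlgClosed.splits (depressedQuartic p q r)
  have hcard := hsplit.natDegree_eq_card_roots
  have heval := hsplit.eval_eq_prod_roots_of_monic (monic p q r)
  obtain ⟨l, hl⟩ := Quot.exists_rep (depressedQuartic p q r).roots
  rw [natDegree, ← hl] at hcard
  match l, hcard with
  | [x, y, z, w], _ =>
    refine ⟨x, y, z, w, fun t => ?_⟩
    rw [← eval, heval, ← hl]
    simp [mul_assoc]

theorem eight_mul_pow_three_add_eq_zero {p q r x y z w : ℝ} (hI : p ^ 2 + 12 * r = 0)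
    (h : ∀ t, t ^ 4 + p * t ^ 2 + q * t + r = (t - x) * (t - y) * (t - z) * (t - w)) :
    8 * p ^ 3 + 27 * q ^ 2 = 0 := by
  have h₀ := h 0
  have h₁ := h 1
  have h₂ := h (-1)
  have h₃ := h 2
  obtain rfl : w = -(x + y + z) := by
    linear_combination (h₀ - h₁) / 2 - h₂ / 6 + h₃ / 6
  obtain rfl : p = x * y + x * z + y * z - (x + y + z) ^ 2 := by
    linear_combination (h₁ + h₂) / 2 - h₀
  obtain rfl : r = -(x * y * z * (x + y + z)) := by linear_combination h₀
  obtain rfl : q = (x + y) * (y + z) * (z + x) := by linear_combination (h₁ - h₂) / 2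
  -- For real roots, `p ^ 2 + 12 r` is a sum of squares; its vanishing forces a triple root.
  have hsum : ((x - y) * (x + y + 2 * z)) ^ 2 + ((x - z) * (x + z + 2 * y)) ^ 2 +
      ((y - z) * (y + z + 2 * x)) ^ 2 = 0 := by linear_combination 2 * hI
  have hxy : (x - y) * (x + y + 2 * z) = 0 := by nlinarith [hsum]
  have hxz : (x - z) * (x + z + 2 * y) = 0 := by nlinarith [hsum]
  have hyz : (y - z) * (y + z + 2 * x) = 0 := by nlinarith [hsum]
  rw [mul_eq_zero] at hxy hxz hyz
  grind

theorem exists_root_im_ne_zero {p q r : ℝ} (hI : p ^ 2 + 12 * r = 0)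
    (hJ : 8 * p ^ 3 + 27 * q ^ 2 ≠ 0) : ∃ z : ℂ, z ^ 4 + p * z ^ 2 + q * z + r = 0 ∧ z.im ≠ 0 := by
  by_contra! hreal
  obtain ⟨x, y, z, w, h⟩ := exists_eval_eq_prod (p : ℂ) q r
  have hre {t : ℂ} (ht : (t - x) * (t - y) * (t - z) * (t - w) = 0) : (t.re : ℂ) = t :=
    Complex.conj_eq_iff_re.1 (Complex.conj_eq_iff_im.2 (hreal t ((h t).trans ht)))
  rw [← hre (t := x) (by simp), ← hre (t := y) (by simp), ← hre (t := z) (by simp),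
    ← hre (t := w) (by simp)] at h
  exact hJ (eight_mul_pow_three_add_eq_zero hI fun t => mod_cast h t)

end depressedQuartic

open NumberField

theorem rank_adjoinRoot_le_two {p q r : ℚ} [Fact (Irreducible (depressedQuartic p q r))]
    (hI : p ^ 2 + 12 * r = 0) (hJ : 8 * p ^ 3 + 27 * q ^ 2 ≠ 0) :
    Units.rank (AdjoinRoot (depressedQuartic p q r)) ≤ 2 := by
  obtain ⟨z, hz, him⟩ := depressedQuartic.exists_root_im_ne_zero (p := p) (q := q) (r := r)
    (mod_cast hI) (mod_cast hJ)
  let σ : AdjoinRoot (depressedQuartic p q r) →+* ℂ :=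
    AdjoinRoot.lift (algebraMap ℚ ℂ) z (by simpa [depressedQuartic] using hz)
  have hσ : ¬ ComplexEmbedding.IsReal σ := fun hreal => by
    have hconj := RingHom.congr_fun (ComplexEmbedding.isReal_iff.1 hreal) (AdjoinRoot.root _)
    rw [ComplexEmbedding.conjugate_coe_eq, AdjoinRoot.lift_root] at hconj
    exact him (Complex.conj_eq_iff_im.1 hconj)
  have hrank := rank_add_two_le_finrank hσ
  have hmonic := depressedQuartic.monic p q r
  rw [(AdjoinRoot.powerBasis hmonic.ne_zero).finrank, AdjoinRoot.powerBasis_dim,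
    depressedQuartic.natDegree] at hrank
  omega

theorem irreducible_depressedQuartic_rat :
    Irreducible (depressedQuartic (-234) 1872 (-4563) : ℚ[X]) := by
  have hlin : ∀ x : ZMod 5, x ^ 4 + -234 * x ^ 2 + 1872 * x + -4563 ≠ 0 := by decide
  have hquad : ∀ a b c : ZMod 5, b + c - a ^ 2 = -234 → a * (c - b) = 1872 → b * c ≠ -4563 := by
    decide
  have : Fact (Nat.Prime 5) := ⟨by norm_num⟩
  have hfive := depressedQuartic.irreducible hlin hquad
  have hint : Irreducible (depressedQuartic (-234) 1872 (-4563) : ℤ[X]) :=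
    (depressedQuartic.monic _ _ _).irreducible_of_irreducible_map (Int.castRingHom (ZMod 5)) _
      (by simpa [depressedQuartic.map] using hfive)
  simpa [depressedQuartic.map] using
    ((depressedQuartic.monic _ _ _).irreducible_iff_irreducible_map_fraction_map (K := ℚ)).1 hint

end DepressedQuartic

/-- The order `ℤ + ℤ f + ℤ f ^ 2 / 3 + ℤ f ^ 3 / 39`, where
`f ^ 4 - 234 f ^ 2 + 1872 f - 4563 = 0`; an element is recorded by its coordinates. -/
@[ext]
structure QuarticOrder where
  /-- The coordinate at `1`. -/
  c₀ : ℤ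
  /-- The coordinate at `f`. -/
  c₁ : ℤ
  /-- The coordinate at `f ^ 2 / 3`. -/
  c₂ : ℤ
  /-- The coordinate at `f ^ 3 / 39`. -/
  c₃ : ℤ

namespace QuarticOrder

@[simps] instance : Zero QuarticOrder := ⟨⟨0, 0, 0, 0⟩⟩

@[simps] instance : One QuarticOrder := ⟨⟨1, 0, 0, 0⟩⟩

@[simps]
instance : Add QuarticOrder :=
  ⟨fun x y => ⟨x.c₀ + y.c₀, x.c₁ + y.c₁, x.c₂ + y.c₂, x.c₃ + y.c₃⟩⟩

@[simps] instance : Neg QuarticOrder := ⟨fun x => ⟨-x.c₀, -x.c₁, -x.c₂, -x.c₃⟩⟩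

@[simps]
instance : Mul QuarticOrder :=
  ⟨fun x y =>
    ⟨x.c₀ * y.c₀ + 117 * (x.c₁ * y.c₃ + x.c₃ * y.c₁) + 507 * (x.c₂ * y.c₂)
        + 702 * (x.c₃ * y.c₃),
      x.c₀ * y.c₁ + x.c₁ * y.c₀ - 48 * (x.c₁ * y.c₃ + x.c₃ * y.c₁) - 208 * (x.c₂ * y.c₂)
        + 39 * (x.c₂ * y.c₃ + x.c₃ * y.c₂) - 288 * (x.c₃ * y.c₃),
      x.c₀ * y.c₂ + x.c₂ * y.c₀ + 3 * (x.c₁ * y.c₁) + 18 * (x.c₁ * y.c₃ + x.c₃ * y.c₁)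
        + 78 * (x.c₂ * y.c₂) - 48 * (x.c₂ * y.c₃ + x.c₃ * y.c₂) + 117 * (x.c₃ * y.c₃),
      x.c₀ * y.c₃ + x.c₃ * y.c₀ + 13 * (x.c₁ * y.c₂ + x.c₂ * y.c₁)
        + 78 * (x.c₂ * y.c₃ + x.c₃ * y.c₂) - 48 * (x.c₃ * y.c₃)⟩⟩

instance : CommRing QuarticOrder where
  add_assoc _ _ _ := by ext <;> simp <;> ring
  zero_add _ := by ext <;> simp
  add_zero _ := by ext <;> simp
  add_comm _ _ := by ext <;> simp <;> ring
  neg_add_cancel _ := by ext <;> simp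
  mul_assoc _ _ _ := by ext <;> simp <;> ring
  one_mul _ := by ext <;> simp
  mul_one _ := by ext <;> simp
  mul_comm _ _ := by ext <;> simp <;> ring
  left_distrib _ _ _ := by ext <;> simp <;> ring
  right_distrib _ _ _ := by ext <;> simp <;> ring
  zero_mul _ := by ext <;> simp
  mul_zero _ := by ext <;> simp
  nsmul := nsmulRec
  zsmul := zsmulRec
  natCast n := ⟨n, 0, 0, 0⟩
  natCast_zero := rfl
  natCast_succ _ := by ext <;> simp
  intCast n := ⟨n, 0, 0, 0⟩
  intCast_ofNat _ := rfl
  intCast_negSucc n := by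
    change (⟨Int.negSucc n, 0, 0, 0⟩ : QuarticOrder) = -⟨(n + 1 : ℕ), 0, 0, 0⟩
    ext <;> simp [Int.negSucc_eq, add_comm]

theorem intCast_def (n : ℤ) : (n : QuarticOrder) = ⟨n, 0, 0, 0⟩ := rfl

theorem ofNat_def (n : ℕ) [n.AtLeastTwo] :
    (OfNat.ofNat n : QuarticOrder) = ⟨OfNat.ofNat n, 0, 0, 0⟩ := rfl

instance : Module.Finite ℤ QuarticOrder := by
  let π : ℤ × ℤ × ℤ × ℤ →+ QuarticOrder :=
    AddMonoidHom.mk' (fun v => ⟨v.1, v.2.1, v.2.2.1, v.2.2.2⟩) fun _ _ => rfl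
  exact Module.Finite.of_surjective π.toIntLinearMap fun x => ⟨(x.c₀, x.c₁, x.c₂, x.c₃), rfl⟩

/-- The homomorphism sending `f` to a root of `X ^ 4 - 234 X ^ 2 + 1872 X - 4563`. -/
def lift {K : Type*} [Field K] [CharZero K] (f : K)
    (hf : f ^ 4 - 234 * f ^ 2 + 1872 * f - 4563 = 0) : QuarticOrder →+* K where
  toFun x := x.c₀ + x.c₁ * f + x.c₂ * (f ^ 2 / 3) + x.c₃ * (f ^ 3 / 39)
  map_zero' := by simp
  map_one' := by simp
  map_add' x y := by
    simp only [add_c₀, add_c₁, add_c₂, add_c₃]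
    push_cast
    ring
  map_mul' x y := by
    simp only [mul_c₀, mul_c₁, mul_c₂, mul_c₃]
    push_cast
    linear_combination
      (-(x.c₁ * y.c₃ + x.c₃ * y.c₁) / 39 - x.c₂ * y.c₂ / 9 - 234 * x.c₃ * y.c₃ / 1521
        - (x.c₂ * y.c₃ + x.c₃ * y.c₂) / 117 * f - x.c₃ * y.c₃ / 1521 * f ^ 2 : K) * hf

open Polynomial

theorem root_depressedQuartic :
    (AdjoinRoot.root (depressedQuartic (-234) 1872 (-4563) : ℚ[X])) ^ 4
      - 234 * AdjoinRoot.root _ ^ 2 + 1872 * AdjoinRoot.root _ - 4563 = 0 := by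
  have h := AdjoinRoot.eval₂_root (depressedQuartic (-234) 1872 (-4563) : ℚ[X])
  rw [eval₂_eq_eval_map, depressedQuartic.map, depressedQuartic.eval] at h
  simp only [map_neg, map_ofNat] at h
  linear_combination h

/-- The embedding of the order in the quartic field generated by `f`. -/
noncomputable def toAdjoinRoot :
    QuarticOrder →+* AdjoinRoot (depressedQuartic (-234) 1872 (-4563) : ℚ[X]) :=
  have : Fact (Irreducible _) := ⟨irreducible_depressedQuartic_rat⟩
  lift (AdjoinRoot.root _) root_depressedQuartic

theorem toAdjoinRoot_injective : Function.Injective toAdjoinRoot :=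
  (injective_iff_map_eq_zero _).2 fun x hx => by
    have : Fact (Irreducible _) := ⟨irreducible_depressedQuartic_rat⟩
    have hdvd : depressedQuartic (-234) 1872 (-4563) ∣
        Cubic.toPoly ⟨(x.c₃ / 39 : ℚ), x.c₂ / 3, x.c₁, x.c₀⟩ := by
      rw [← AdjoinRoot.mk_eq_zero, ← hx]
      simp only [Cubic.toPoly, map_intCast, map_add, map_mul, AdjoinRoot.mk_C, map_div₀,
        eq_ratCast, Rat.cast_ofNat, map_pow, AdjoinRoot.mk_X, toAdjoinRoot, lift, RingHom.coe_mk,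
        MonoidHom.coe_mk, OneHom.coe_mk]
      ring
    have hdeg : (Cubic.toPoly ⟨(x.c₃ / 39 : ℚ), x.c₂ / 3, x.c₁, x.c₀⟩).degree <
        (depressedQuartic (-234 : ℚ) 1872 (-4563)).degree := by
      rw [Polynomial.degree_eq_natDegree (depressedQuartic.monic _ _ _).ne_zero,
        depressedQuartic.natDegree]
      exact Polynomial.degree_cubic_lt
    obtain ⟨h₃, h₂, h₁, h₀⟩ := Cubic.mk.inj ((Cubic.toPoly_eq_zero_iff _).1
      (Polynomial.eq_zero_of_dvd_of_degree_lt hdvd hdeg))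
    ext <;> simp_all

instance : IsDomain QuarticOrder :=
  have : Fact (Irreducible _) := ⟨irreducible_depressedQuartic_rat⟩
  toAdjoinRoot_injective.isDomain toAdjoinRoot

instance : CharZero QuarticOrder :=
  ⟨fun _ _ h => Int.ofNat.inj (congrArg c₀ h)⟩

theorem two_dvd_iff {x : QuarticOrder} :
    2 ∣ x ↔ Even x.c₀ ∧ Even x.c₁ ∧ Even x.c₂ ∧ Even x.c₃ := by
  simp only [even_iff_two_dvd, dvd_def, QuarticOrder.ext_iff, ofNat_def]
  constructor
  · rintro ⟨y, h₀, h₁, h₂, h₃⟩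
    exact ⟨⟨y.c₀, by simpa using h₀⟩, ⟨y.c₁, by simpa using h₁⟩, ⟨y.c₂, by simpa using h₂⟩,
      ⟨y.c₃, by simpa using h₃⟩⟩
  · rintro ⟨⟨a, h₀⟩, ⟨b, h₁⟩, ⟨c, h₂⟩, ⟨d, h₃⟩⟩
    exact ⟨⟨a, b, c, d⟩, by simpa using h₀, by simpa using h₁, by simpa using h₂,
      by simpa using h₃⟩

/-- The generator `f`. -/
def gen : QuarticOrder := ⟨0, 1, 0, 0⟩

theorem indepModTwo_gen {A B : QuarticOrder} (hA : Odd A.c₃) (hB₂ : Odd B.c₂) (hB₃ : Even B.c₃) :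
    IndepModTwo gen ![A, B] := by
  intro c k n h
  simp only [Fin.sum_univ_two, two_dvd_iff, gen, intCast_def, add_c₀, add_c₁, add_c₂, add_c₃,
    mul_c₀, mul_c₁, mul_c₂, mul_c₃, Matrix.cons_val_zero, Matrix.cons_val_one, mul_zero, zero_mul,
    add_zero, zero_add, sub_zero, mul_one] at h
  obtain ⟨h₀, h₁, h₂, h₃⟩ := h
  have hn₀ : Even (n 0) := (Int.even_mul.1 ((Int.even_add.1 h₃).2 (hB₃.mul_left _))).resolve_right
    (Int.not_even_iff_odd.2 hA)
  have hn₁ : Even (n 1) := (Int.even_mul.1 ((Int.even_add.1 h₂).1 (hn₀.mul_right _))).resolve_right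
    (Int.not_even_iff_odd.2 hB₂)
  have hk : Even k := (Int.even_add.1 h₁).2 ((hn₀.mul_right _).add (hn₁.mul_right _))
  have hc : Even c := (Int.even_add.1 h₀).2 ((hn₀.mul_right _).add (hn₁.mul_right _))
  simpa only [← even_iff_two_dvd, Fin.forall_fin_two] using ⟨hc, hk, hn₀, hn₁⟩

/-- A unit whose fourth power is congruent to `1` modulo `4`. -/
def unit₁ : QuarticOrderˣ :=
  Units.mkOfMulEqOne ⟨-33227, 8281, -470, -1493⟩
    ⟨374766764269, -112899206609, 20736863258, 29385346205⟩ rfl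

/-- A unit congruent to `1` modulo `4`, independent of `unit₁`. -/
def unit₂ : QuarticOrderˣ :=
  Units.mkOfMulEqOne ⟨-326611, 80248, -4596, -14176⟩ ⟨-273259, 82376, -15180, -21344⟩ rfl

theorem val_unit₁_pow_four : ((unit₁ ^ 4 : QuarticOrderˣ) : QuarticOrder) =
    1 + 4 * ⟨4106408452090308, -559627326839273, -15932756308784, 74482932123789⟩ := by
  rw [Units.val_pow_eq_pow_val, show 4 = 2 * 2 from rfl, pow_mul, sq, sq]
  ext <;> simp [unit₁, ofNat_def]

theorem val_unit₂ : (unit₂ : QuarticOrder) = 1 + 4 * ⟨-81653, 20062, -1149, -3544⟩ :=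
  rfl

theorem exists_units_indepModTwo : ∃ (E : Fin 2 → QuarticOrderˣ) (A : Fin 2 → QuarticOrder),
    (∀ i, (E i : QuarticOrder) = 1 + 4 * A i) ∧ IndepModTwo gen A :=
  ⟨![unit₁ ^ 4, unit₂], ![_, _], Fin.forall_fin_two.2 ⟨val_unit₁_pow_four, val_unit₂⟩,
    indepModTwo_gen (by decide) (by decide) (by decide)⟩

theorem exists_prod_zpow_eq_one {ι : Type*} [Fintype ι] (hι : 2 < Fintype.card ι)
    (u : ι → QuarticOrderˣ) : ∃ n : ι → ℤ, n ≠ 0 ∧ ∏ i, u i ^ n i = 1 :=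
  have : Fact (Irreducible _) := ⟨irreducible_depressedQuartic_rat⟩
  exists_prod_zpow_eq_one_of_injective toAdjoinRoot_injective
    ((rank_adjoinRoot_le_two (by norm_num) (by norm_num)).trans_lt hι) u

theorem exists_unit_eq_sub_mul_gen {m b : ℤ}
    (h : m ^ 4 - 234 * m ^ 2 * b ^ 2 + 1872 * m * b ^ 3 - 4563 * b ^ 4 = 1) :
    ∃ V : QuarticOrderˣ, (V : QuarticOrder) = m - b * gen :=
  ⟨Units.mkOfMulEqOne (m - b * gen)
    ⟨m ^ 3 - 234 * m * b ^ 2 + 1872 * b ^ 3, m ^ 2 * b - 234 * b ^ 3, 3 * m * b ^ 2, 39 * b ^ 3⟩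
    (by
      rw [sub_eq_add_neg]
      ext <;> simp [gen, intCast_def]
      · linear_combination h
      all_goals ring), rfl⟩

end QuarticOrder

section Thue

variable {m b : ℤ}

theorem odd_and_four_dvd_of_thue_eq_one
    (h : m ^ 4 - 234 * m ^ 2 * b ^ 2 + 1872 * m * b ^ 3 - 4563 * b ^ 4 = 1) : Odd m ∧ 4 ∣ b := by
  have hmod : ∀ m b : ZMod 16, m ^ 4 - 234 * m ^ 2 * b ^ 2 + 1872 * m * b ^ 3 - 4563 * b ^ 4 = 1 →
      8 * m ≠ 0 ∧ 4 * b = 0 := by decide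
  obtain ⟨hm, hb⟩ := hmod m b (mod_cast congrArg (Int.cast : ℤ → ZMod 16) h)
  have hm' : ¬ (16 : ℤ) ∣ 8 * m := mt (ZMod.intCast_zmod_eq_zero_iff_dvd _ 16).2 (mod_cast hm)
  have hb' : (16 : ℤ) ∣ 4 * b := (ZMod.intCast_zmod_eq_zero_iff_dvd _ 16).1 (mod_cast hb)
  rw [Int.odd_iff]
  omega

theorem eq_zero_of_thue_eq_one
    (h : m ^ 4 - 234 * m ^ 2 * b ^ 2 + 1872 * m * b ^ 3 - 4563 * b ^ 4 = 1) : b = 0 := by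
  by_contra hb₀
  obtain ⟨hm, hb⟩ := odd_and_four_dvd_of_thue_eq_one h
  obtain ⟨V, hV⟩ := QuarticOrder.exists_unit_eq_sub_mul_gen h
  obtain ⟨E, A, hE, hA⟩ := QuarticOrder.exists_units_indepModTwo
  obtain ⟨n, hn, hprod⟩ := QuarticOrder.exists_prod_zpow_eq_one (by simp) (Fin.cons V E)
  rw [Fin.prod_univ_succ] at hprod
  simp only [Fin.cons_zero, Fin.cons_succ] at hprod
  obtain ⟨hzero, hsucc⟩ := hA.eq_zero_of_zpow_mul_prod_zpow_eq_one hE hm hb hb₀ hV hprod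
  exact hn (funext (Fin.cases hzero (congrFun hsucc)))

end Thue

/-! ### The equation `3z² + 1 = 13x³` -/

theorem solutionForm_I (x z : ℤ) : (solutionForm x z).I = 0 := by
  simp only [solutionForm, BinaryQuartic.I]; ring

theorem solutionForm_J {x z : ℤ} (h : 3 * z ^ 2 + 1 = 13 * x ^ 3) : (solutionForm x z).J = 676 := by
  simp only [solutionForm, BinaryQuartic.J]; linear_combination (-676) * h

theorem solutionForm_hessian_one_zero (x z : ℤ) : (solutionForm x z).hessian 1 0 = 39 * x := by
  rw [BinaryQuartic.hessian_one_zero, solutionForm]; ring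

theorem thirteen_dvd_solutionForm_hessian (x z m b : ℤ) : 13 ∣ (solutionForm x z).hessian m b := by
  refine ⟨52 * b ^ 2 * (z * b - x * m) ^ 2 +
    (3 * m ^ 2 - 13 * x * b ^ 2) * (x * m ^ 2 - 4 * z * m * b + 13 * x ^ 2 * b ^ 2), ?_⟩
  simp only [solutionForm, BinaryQuartic.hessian]
  ring

theorem solutionForm_eval_mod_thirteen (x z m b : ℤ) :
    ((solutionForm x z).eval m b : ZMod 13) ∈ ({0, 1, 3, 9} : Finset (ZMod 13)) := by
  have heval : (solutionForm x z).eval m b =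
      3 * m ^ 4 + 13 * (-6 * x * m ^ 2 * b ^ 2 + 8 * z * m * b ^ 3 - 13 * x ^ 2 * b ^ 4) := by
    simp only [solutionForm, BinaryQuartic.eval]; ring
  have hfourth : ∀ m : ZMod 13, 3 * m ^ 4 ∈ ({0, 1, 3, 9} : Finset (ZMod 13)) := by decide +kernel
  rw [heval]
  push_cast
  rw [show (13 : ZMod 13) = 0 from rfl, zero_mul, add_zero]
  exact hfourth m

theorem twelve_dvd_sub_one_and_even {x z : ℤ} (h : 3 * z ^ 2 + 1 = 13 * x ^ 3) :
    12 ∣ x - 1 ∧ Even z := by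
  have hmod : ∀ x z : ZMod 48, 3 * z ^ 2 + 1 = 13 * x ^ 3 → 4 * (x - 1) = 0 ∧ 24 * z = 0 := by
    decide +kernel
  obtain ⟨hx, hz⟩ := hmod x z (by exact_mod_cast congrArg (Int.cast : ℤ → ZMod 48) h)
  have hx' := (ZMod.intCast_zmod_eq_zero_iff_dvd (4 * (x - 1)) 48).1 (by exact_mod_cast hx)
  have hz' := (ZMod.intCast_zmod_eq_zero_iff_dvd (24 * z) 48).1 (by exact_mod_cast hz)
  exact ⟨by omega, Int.even_iff.2 (by omega)⟩

theorem solutionForm_eval_mod_sixteen {x z m b n d : ℤ} (h : 3 * z ^ 2 + 1 = 13 * x ^ 3)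
    (hdet : m * d - n * b = 1) : 8 * ((solutionForm x z).eval m b : ZMod 16) = 8 ∨
      ((solutionForm x z).eval m b : ZMod 16) = 12 := by
  obtain ⟨⟨k, hk⟩, l, rfl⟩ := twelve_dvd_sub_one_and_even h
  obtain rfl : x = 12 * k + 1 := by linarith
  have heval : (solutionForm (12 * k + 1) (l + l)).eval m b = 3 * m ^ 4 -
      78 * (12 * k + 1) * m ^ 2 * b ^ 2 - 169 * (12 * k + 1) ^ 2 * b ^ 4 +
      16 * (13 * l * m * b ^ 3) := by
    simp only [solutionForm, BinaryQuartic.eval]; ring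
  have hmod : ∀ k m b : ZMod 16, ¬ (8 * m = 0 ∧ 8 * b = 0) →
      8 * (3 * m ^ 4 - 78 * (12 * k + 1) * m ^ 2 * b ^ 2 - 169 * (12 * k + 1) ^ 2 * b ^ 4) = 8 ∨
      3 * m ^ 4 - 78 * (12 * k + 1) * m ^ 2 * b ^ 2 - 169 * (12 * k + 1) ^ 2 * b ^ 4 = 12 := by
    decide +kernel
  have hdet' : (m * d - n * b : ZMod 16) = 1 := by exact_mod_cast congrArg Int.cast hdet
  rw [heval]
  push_cast
  rw [show (16 : ZMod 16) = 0 from rfl, zero_mul, add_zero]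
  refine hmod k m b fun ⟨hm, hb⟩ => absurd ?_ (by decide : (8 : ZMod 16) ≠ 0)
  linear_combination d * hm - n * hb - 8 * hdet'

theorem eq_or_eq_of_isSquare_thirteen_mul_pow_three_sub {a h : ℤ} (ha : -17 < a) (ha' : a < 16)
    (hh : |h| ≤ 15) (hmod : (a : ZMod 13) ∈ ({0, 1, 3, 9} : Finset (ZMod 13)))
    (hparity : 8 * (a : ZMod 16) = 8 ∨ (a : ZMod 16) = 12)
    (hsq : IsSquare (13 * h ^ 3 - a ^ 3)) : a = -4 ∧ h = 0 ∨ a = 3 ∧ h = 3 := by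
  have hfinite : ∀ a ∈ Finset.Ioo (-17 : ℤ) 16, ∀ h ∈ Finset.Icc (-15 : ℤ) 15,
      (a : ZMod 13) ∈ ({0, 1, 3, 9} : Finset (ZMod 13)) →
      (8 * (a : ZMod 16) = 8 ∨ (a : ZMod 16) = 12) →
      IsSquare (13 * h ^ 3 - a ^ 3) → a = -4 ∧ h = 0 ∨ a = 3 ∧ h = 3 := by
    decide +kernel
  exact hfinite a (Finset.mem_Ioo.2 ⟨ha, ha'⟩) h (Finset.mem_Icc.2 (abs_le.1 hh)) hmod hparity hsq

theorem isSquare_of_solutionForm_hessian_eq {x z m b n d h : ℤ}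
    (hxz : 3 * z ^ 2 + 1 = 13 * x ^ 3) (hdet : m * d - n * b = 1)
    (hh : (solutionForm x z).hessian m b = 13 * h) :
    IsSquare (13 * h ^ 3 - (solutionForm x z).eval m b ^ 3) := by
  have hsyzygy := ((solutionForm x z).subst m b n d).syzygy
  rw [← BinaryQuartic.hessian_one_zero, BinaryQuartic.hessian_subst, BinaryQuartic.I_subst,
    BinaryQuartic.J_subst, hdet, solutionForm_I, solutionForm_J hxz] at hsyzygy
  simp only [mul_one, mul_zero, add_zero, hh] at hsyzygy
  obtain ⟨k, hk⟩ := (Int.pow_dvd_pow_iff two_ne_zero).1 (Dvd.intro (a := (26 : ℤ) ^ 2)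
    (13 * h ^ 3 - ((solutionForm x z).subst m b n d).a₀ ^ 3) (by rw [hsyzygy]; ring))
  rw [hk, show ((solutionForm x z).subst m b n d).a₀ = (solutionForm x z).eval m b from rfl]
    at hsyzygy
  exact ⟨k, by linarith⟩

theorem exists_reduced_form {x z : ℤ} (hx : 13 ≤ x) (hz : 0 < z) (h : 3 * z ^ 2 + 1 = 13 * x ^ 3) :
    ∃ (G : BinaryQuartic ℤ) (p q : ℤ), G.I = 0 ∧ G.J = 676 ∧ G.eval p q = 3 ∧
      G.hessian p q = 39 * x ∧ 0 ≤ G.a₁ ∧ G.a₁ < |G.a₀| ∧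
      (G.a₀ = -4 ∧ G.a₁ ^ 2 - G.a₀ * G.a₂ = 0 ∨ G.a₀ = 3 ∧ G.a₁ ^ 2 - G.a₀ * G.a₂ = 39) := by
  obtain ⟨m, b, n, d, hdet, hlower, hupper, hhessian⟩ := exists_eval_lt_hessian_lt hx hz h
  obtain ⟨k, hk⟩ := thirteen_dvd_solutionForm_hessian x z m b
  have hbound : |k| ≤ 15 := by
    rw [hk, abs_mul, abs_of_pos (by norm_num)] at hhessian
    omega
  have hcases := eq_or_eq_of_isSquare_thirteen_mul_pow_three_sub hlower hupper hbound
    (solutionForm_eval_mod_thirteen x z m b) (solutionForm_eval_mod_sixteen h hdet)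
    (isSquare_of_solutionForm_hessian_eq h hdet hk)
  obtain ⟨n, d, hdet, ha₁, ha₁'⟩ :=
    (solutionForm x z).exists_subst_a₁_lt hdet (by rcases hcases with h | h <;> simp [h.1])
  have hpoint : m * d + n * -b = 1 ∧ b * d + d * -b = 0 := ⟨by linarith, by ring⟩
  refine ⟨(solutionForm x z).subst m b n d, d, -b, ?_, ?_, ?_, ?_, ha₁, ha₁', ?_⟩
  · rw [BinaryQuartic.I_subst, solutionForm_I, mul_zero]
  · rw [BinaryQuartic.J_subst, solutionForm_J h, hdet, one_pow, one_mul]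
  · rw [BinaryQuartic.eval_subst, hpoint.1, hpoint.2, BinaryQuartic.eval_one_zero, solutionForm]
  · rw [BinaryQuartic.hessian_subst, hpoint.1, hpoint.2, hdet, solutionForm_hessian_one_zero]; ring
  · rw [← BinaryQuartic.hessian_one_zero, BinaryQuartic.hessian_subst, hdet]
    simp only [mul_one, mul_zero, add_zero, one_pow, one_mul, hk]
    rcases hcases with ⟨ha, rfl⟩ | ⟨ha, rfl⟩
    · exact .inl ⟨ha, rfl⟩
    · exact .inr ⟨ha, rfl⟩

theorem two_dvd_eval_of_reduced {G : BinaryQuartic ℤ} (hI : G.I = 0) (ha₀ : G.a₀ = -4)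
    (ha₁ : 0 ≤ G.a₁) (ha₁' : G.a₁ < |G.a₀|) (hh : G.a₁ ^ 2 - G.a₀ * G.a₂ = 0) (p q : ℤ) :
    2 ∣ G.eval p q := by
  obtain ⟨a₀, a₁, a₂, a₃, a₄⟩ := G
  simp only [BinaryQuartic.I] at *
  subst ha₀
  norm_num at ha₁'
  have ha₄ : a₄ = 0 := by
    obtain rfl | rfl : a₁ = 0 ∨ a₁ = 2 := by interval_cases a₁ <;> omega
    · obtain rfl : a₂ = 0 := by omega
      omega
    · obtain rfl : a₂ = -1 := by omega
      omega
  simp only [BinaryQuartic.eval, ha₄]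
  exact ⟨-2 * p ^ 4 + 2 * a₁ * p ^ 3 * q + 3 * a₂ * p ^ 2 * q ^ 2 + 2 * a₃ * p * q ^ 3, by ring⟩

theorem eq_solutionForm_one_two {G : BinaryQuartic ℤ} (hI : G.I = 0) (hJ : G.J = 676)
    (ha₀ : G.a₀ = 3) (ha₁ : 0 ≤ G.a₁) (ha₁' : G.a₁ < |G.a₀|)
    (hh : G.a₁ ^ 2 - G.a₀ * G.a₂ = 39) : G = solutionForm 1 2 ∨ G = solutionForm 1 (-2) := by
  obtain ⟨a₀, a₁, a₂, a₃, a₄⟩ := G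
  simp only [BinaryQuartic.I, BinaryQuartic.J] at *
  subst ha₀
  norm_num at ha₁'
  have ha₁₀ : a₁ = 0 := by interval_cases a₁ <;> omega
  subst ha₁₀
  obtain rfl : a₂ = -13 := by omega
  obtain rfl : a₄ = -169 := by omega
  have ha₃ : a₃ ^ 2 = 52 ^ 2 := by linarith
  rcases sq_eq_sq_iff_eq_or_eq_neg.1 ha₃ with rfl | rfl
  · exact .inl rfl
  · exact .inr rfl

theorem exists_solutionForm_one_two_eval_eq {x z : ℤ} (hx : 13 ≤ x) (hz : 0 < z)
    (h : 3 * z ^ 2 + 1 = 13 * x ^ 3) : ∃ p q : ℤ, (solutionForm 1 2).eval p q = 3 ∧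
      (solutionForm 1 2).hessian p q = 39 * x := by
  obtain ⟨G, p, q, hI, hJ, heval, hhessian, ha₁, ha₁', ⟨ha₀, hh⟩ | ⟨ha₀, hh⟩⟩ :=
    exists_reduced_form hx hz h
  · have := two_dvd_eval_of_reduced hI ha₀ ha₁ ha₁' hh p q
    omega
  obtain rfl | rfl := eq_solutionForm_one_two hI hJ ha₀ ha₁ ha₁' hh
  · exact ⟨p, q, heval, hhessian⟩
  · refine ⟨p, -q, ?_, ?_⟩
    · rw [← heval]; simp only [solutionForm, BinaryQuartic.eval]; ring
    · rw [← hhessian]; simp only [solutionForm, BinaryQuartic.hessian]; ring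

theorem three_dvd_of_solutionForm_one_two_eval_eq {p q x : ℤ}
    (heval : (solutionForm 1 2).eval p q = 3) (hh : (solutionForm 1 2).hessian p q = 39 * x) :
    3 ∣ q := by
  have hmod : ∀ p q : ZMod 9,
      3 * p ^ 4 - 78 * p ^ 2 * q ^ 2 + 208 * p * q ^ 3 - 169 * q ^ 4 = 3 →
      3 * (52 * q ^ 2 * (2 * q - p) ^ 2 +
        (3 * p ^ 2 - 13 * q ^ 2) * (p ^ 2 - 8 * p * q + 13 * q ^ 2)) = 0 → 3 * q = 0 := by
    decide +kernel
  have heval' : 3 * p ^ 4 - 78 * p ^ 2 * q ^ 2 + 208 * p * q ^ 3 - 169 * q ^ 4 = 3 := by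
    simp only [solutionForm, BinaryQuartic.eval] at heval; linarith
  have hh' : 3 * (52 * q ^ 2 * (2 * q - p) ^ 2 +
      (3 * p ^ 2 - 13 * q ^ 2) * (p ^ 2 - 8 * p * q + 13 * q ^ 2)) = 9 * x := by
    simp only [solutionForm, BinaryQuartic.hessian] at hh; linarith
  have hq := hmod p q (by exact_mod_cast congrArg (Int.cast : ℤ → ZMod 9) heval') (by
    have := congrArg (Int.cast : ℤ → ZMod 9) hh'
    push_cast at this
    rw [this, show (9 : ZMod 9) = 0 from rfl, zero_mul])
  have hdvd := (ZMod.intCast_zmod_eq_zero_iff_dvd (3 * q) 9).1 (by exact_mod_cast hq)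
  omega

theorem eq_one_of_three_mul_sq_add_one_eq {x z : ℤ} (h : 3 * z ^ 2 + 1 = 13 * x ^ 3) : x = 1 := by
  obtain ⟨⟨k, hk⟩, -⟩ := twelve_dvd_sub_one_and_even h
  by_contra hx₁
  have hx₀ : 0 < x := by
    by_contra! hx₀
    nlinarith [sq_nonneg z, Odd.pow_nonpos (by decide : Odd 3) hx₀]
  have hz₀ : z ≠ 0 := by rintro rfl; omega
  obtain ⟨p, q, heval, hhessian⟩ := exists_solutionForm_one_two_eval_eq (x := x) (z := |z|)
    (by omega) (abs_pos.2 hz₀) (by rwa [sq_abs])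
  obtain ⟨r, rfl⟩ := three_dvd_of_solutionForm_one_two_eval_eq heval hhessian
  simp only [solutionForm, BinaryQuartic.eval] at heval
  obtain rfl := eq_zero_of_thue_eq_one (m := p) (b := r) (by linarith)
  simp only [solutionForm, BinaryQuartic.hessian] at hhessian
  exact hx₁ (by linarith)

theorem stmt_12 :
    (∀ X Y : ℤ, Y ^ 2 = X ^ 3 - 4563 ↔ (X = 39 ∧ Y = 234) ∨ (X = 39 ∧ Y = -234)) ∧
    (¬ ∃ X Y : ℤ, Y ^ 2 = X ^ 3 + 4563) := by
  refine ⟨fun X Y => ⟨fun h => ?_, ?_⟩, fun ⟨X, Y, h⟩ => sq_ne_pow_three_add X Y h⟩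
  · obtain ⟨x, z, rfl, hxz⟩ := exists_three_mul_sq_eq_of_sq_eq_pow_three_sub h
    obtain rfl := eq_one_of_three_mul_sq_add_one_eq hxz
    simpa using sq_eq_sq_iff_eq_or_eq_neg.1 (show Y ^ 2 = 234 ^ 2 by linarith)
  · rintro (⟨rfl, rfl⟩ | ⟨rfl, rfl⟩) <;> norm_num
end

section
/- The integral solutions (X, Y) of the Mordell equation Y^2 = X^3 + 36504 are exactly (X, Y) = (30, 252) and (X, Y) = (30, −252), and the Mordell equation Y^2 = X^3 − 36504 has no integral solutions. -/
/-!
Let `d = ± 6`, so that `z = Y + 78 * √d` has norm `X ^ 3` in `ℤ√d`. Every ideal of `ℤ√d` is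
principal up to a factor `K`, with `K = 1` for `d = 6` and `K = 2` for `d = -6`. A generator `b`
of the ideal `(X, z)` in this sense satisfies `b ^ 3 = z * c`, where `c` divides `K ^ 3 * g` with
`g = gcd (X ^ 2, 4 * d * 78 ^ 2)`; congruences show `g ∣ 36` if `d = 6`, `g ∣ 4` if `d = -6`.

For `d = -6` the number `c` is then a rational integer `p ∣ 32`, and comparing the coefficients of
`√-6` gives `Q * (P ^ 2 - 2 * Q ^ 2) = 26 * p`, which has no solutions. For `d = 6` the primes
dividing `c` ramify, so that `z` is a unit times a cube. Modulo cubes the unit is `1` or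
`(5 + 2 * √6) ^ (± 1)`. The unit `1` is impossible, and the others lead to the Thue equation
`t ^ 3 - 9 * t * u ^ 2 + 18 * u ^ 3 = 26`.

The left side is the norm of `t + u * θ`, where `θ ^ 3 = 9 * θ + 18`. A fundamental domain for the
powers of the unit `η = 1 + θ + θ ^ 2 / 3` shows that, up to these powers, every element of norm
`26` is one of two. The powers of `η` for which the coefficient of `θ ^ 2 / 3` vanishes are found
by a congruence modulo `7` in one case and by Skolem's `3`-adic method in the other.
-/

/-! ### Skolem's method -/

section UnitPowers

variable {R : Type*} [CommRing R] (u : Rˣ)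

theorem sq_sub_one_dvd_zpow_sub_one_sub (m : ℤ) :
    ((u : R) - 1) ^ 2 ∣ ((u ^ m : Rˣ) : R) - 1 - m * ((u : R) - 1) := by
  induction m with
  | zero => simp
  | succ m ih =>
    have hrec : ((u ^ ((m : ℤ) + 1) : Rˣ) : R) - 1 - ((m : ℤ) + 1 : ℤ) * ((u : R) - 1) =
        u * (((u ^ (m : ℤ) : Rˣ) : R) - 1 - (m : ℤ) * ((u : R) - 1)) + m * ((u : R) - 1) ^ 2 := by
      rw [zpow_add_one]
      push_cast
      ring
    rw [hrec]
    exact (ih.mul_left _).add (dvd_mul_left _ _)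
  | pred m ih =>
    have hrec : u * (((u ^ (-(m : ℤ) - 1) : Rˣ) : R) - 1 - (-(m : ℤ) - 1 : ℤ) * ((u : R) - 1)) =
        (((u ^ (-(m : ℤ)) : Rˣ) : R) - 1 - (-(m : ℤ) : ℤ) * ((u : R) - 1)) +
          (m + 1) * ((u : R) - 1) ^ 2 := by
      have hu : (u : R) * ((u ^ (-(m : ℤ) - 1) : Rˣ) : R) = ((u ^ (-(m : ℤ)) : Rˣ) : R) := by
        rw [← Units.val_mul, mul_comm, ← zpow_add_one, sub_add_cancel]
      rw [mul_sub, mul_sub, hu]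
      push_cast
      ring
    rw [← u.dvd_mul_left, hrec]
    exact ih.add (dvd_mul_left _ _)

theorem sub_one_dvd_zpow_sub_one (m : ℤ) : (u : R) - 1 ∣ ((u ^ m : Rˣ) : R) - 1 := by
  have h := (dvd_pow_self ((u : R) - 1) two_ne_zero).trans (sq_sub_one_dvd_zpow_sub_one_sub u m)
  exact (dvd_sub_left (dvd_mul_left _ _)).mp h

variable {u} {p : ℕ}

theorem pow_add_two_dvd_pow_pow_sub_one (hu : (p : R) ^ 2 ∣ (u : R) - 1) (k : ℕ) :
    (p : R) ^ (k + 2) ∣ ((u ^ p ^ k : Rˣ) : R) - 1 := by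
  induction k with
  | zero => simpa using hu
  | succ k ih =>
    set w := u ^ p ^ k with hw
    have hlin : (p : R) ^ (k + 3) ∣ p * ((w : R) - 1) := by
      rw [pow_succ']; exact mul_dvd_mul_left _ ih
    have hsq : (p : R) ^ (k + 3) ∣ ((w : R) - 1) ^ 2 :=
      (pow_dvd_pow _ (by omega)).trans (pow_mul (p : R) (k + 2) 2 ▸ pow_dvd_pow_of_dvd ih 2)
    have h := hsq.trans (sq_sub_one_dvd_zpow_sub_one_sub w p)
    rw [zpow_natCast, Int.cast_natCast] at h
    rw [pow_succ p k, pow_mul, ← hw]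
    exact (dvd_sub_left hlin).mp h

theorem pow_add_four_dvd_sq_pow_pow_sub_one (hu : (p : R) ^ 2 ∣ (u : R) - 1) (k : ℕ) :
    (p : R) ^ (k + 4) ∣ (((u ^ p ^ k : Rˣ) : R) - 1) ^ 2 :=
  (pow_dvd_pow _ (by omega)).trans
    (pow_mul (p : R) (k + 2) 2 ▸ pow_dvd_pow_of_dvd (pow_add_two_dvd_pow_pow_sub_one hu k) 2)

theorem pow_add_three_dvd_pow_pow_sub_one_sub (hu : (p : R) ^ 2 ∣ (u : R) - 1) (k : ℕ) :
    (p : R) ^ (k + 3) ∣ ((u ^ p ^ k : Rˣ) : R) - 1 - p ^ k * ((u : R) - 1) := by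
  induction k with
  | zero => simp
  | succ k ih =>
    set w := u ^ p ^ k with hw
    have hquad : (p : R) ^ (k + 4) ∣ ((w ^ p : Rˣ) : R) - 1 - p * ((w : R) - 1) := by
      simpa using (pow_add_four_dvd_sq_pow_pow_sub_one hu k).trans
        (sq_sub_one_dvd_zpow_sub_one_sub w p)
    have hih : (p : R) ^ (k + 4) ∣ p * ((w : R) - 1 - p ^ k * ((u : R) - 1)) := by
      rw [pow_succ']; exact mul_dvd_mul_left _ ih
    rw [pow_succ p k, pow_mul, ← hw]
    convert hquad.add hih using 1
    ring

theorem pow_add_three_dvd_zpow_sub_one_sub (hu : (p : R) ^ 2 ∣ (u : R) - 1) (k : ℕ) (m : ℤ) :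
    (p : R) ^ (k + 3) ∣
      ((u ^ (p ^ k * m) : Rˣ) : R) - 1 - (p ^ k * m : ℤ) * ((u : R) - 1) := by
  have hlin := pow_add_three_dvd_pow_pow_sub_one_sub hu k
  set w := u ^ p ^ k with hw
  have hzpow : u ^ ((p : ℤ) ^ k * m) = w ^ m := by
    rw [zpow_mul, hw]; exact_mod_cast rfl
  have hquad : (p : R) ^ (k + 3) ∣ ((w ^ m : Rˣ) : R) - 1 - m * ((w : R) - 1) :=
    (pow_dvd_pow _ (by omega)).trans ((pow_add_four_dvd_sq_pow_pow_sub_one hu k).trans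
      (sq_sub_one_dvd_zpow_sub_one_sub w m))
  rw [hzpow]
  convert hquad.add (hlin.mul_left m) using 1
  push_cast
  ring

variable {e : Rˣ} {r : ℕ} (f : R →+ ℤ)

theorem natCast_dvd_map_of_natCast_dvd {q : ℕ} {x : R} (h : (q : R) ∣ x) : (q : ℤ) ∣ f x := by
  obtain ⟨y, rfl⟩ := h
  rw [← nsmul_eq_mul, map_nsmul, nsmul_eq_mul]
  exact dvd_mul_right _ _

theorem dvd_map_zpow_sub_map_pow_emod {q : ℕ} (he : (q : R) ∣ (e : R) ^ r - 1) (n : ℤ) :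
    (q : ℤ) ∣ f ((e ^ n : Rˣ) : R) - f ((e ^ (n % r) : Rˣ) : R) := by
  rw [← map_sub]
  apply natCast_dvd_map_of_natCast_dvd
  have hper : (q : R) ∣ (((e ^ r) ^ (n / r) : Rˣ) : R) - 1 :=
    he.trans (by simpa using sub_one_dvd_zpow_sub_one (e ^ r) (n / r))
  have hsplit : e ^ n = e ^ (n % r) * (e ^ r) ^ (n / r) := by
    rw [← zpow_natCast, ← zpow_mul, ← zpow_add, Int.emod_add_mul_ediv]
  rw [hsplit, Units.val_mul]
  convert hper.mul_left ((e ^ (n % r) : Rˣ) : R) using 1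
  ring

theorem exists_lt_dvd_map_pow_of_map_zpow_eq_zero {q : ℕ} (hr : r ≠ 0)
    (he : (q : R) ∣ (e : R) ^ r - 1) {n : ℤ} (hn : f ((e ^ n : Rˣ) : R) = 0) :
    ∃ i < r, (i : ℤ) = n % r ∧ (q : ℤ) ∣ f ((e : R) ^ i) := by
  have hnn : 0 ≤ n % r := Int.emod_nonneg _ (by exact_mod_cast hr)
  have hlt : n % r < r := Int.emod_lt_of_pos _ (by omega)
  have h := dvd_map_zpow_sub_map_pow_emod f he n
  obtain ⟨i, hi⟩ := Int.eq_ofNat_of_zero_le hnn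
  rw [hn, zero_sub, dvd_neg, hi, zpow_natCast, Units.val_pow_eq_pow_val] at h
  exact ⟨i, by omega, hi.symm, h⟩

theorem pow_dvd_mul_map_of_map_zpow_eq_zero (h1 : f 1 = 0)
    (hu : (p : R) ^ 2 ∣ (u : R) - 1) {k : ℕ} {m : ℤ} (hm : f ((u ^ (p ^ k * m) : Rˣ) : R) = 0) :
    (p : ℤ) ^ (k + 3) ∣ p ^ k * m * f u := by
  have h := natCast_dvd_map_of_natCast_dvd (q := p ^ (k + 3)) f
    (by simpa only [Nat.cast_pow] using pow_add_three_dvd_zpow_sub_one_sub hu k m)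
  rwa [← zsmul_eq_mul, map_sub, map_sub, map_zsmul, map_sub, hm, h1, sub_zero, sub_zero, zero_sub,
    dvd_neg, smul_eq_mul, Nat.cast_pow] at h

/-- Skolem's method: the exponents `n` with `f (e ^ n) = 0` lie in the residue class of `0`
modulo `r`, and there `f (e ^ (r * N))` is `N * f (e ^ r)` up to higher powers of `p`. -/
theorem eq_zero_of_map_zpow_eq_zero (hp : p.Prime) (hr : r ≠ 0)
    (he : (p : R) ^ 2 ∣ (e : R) ^ r - 1) (h1 : f 1 = 0)
    (hres : ∀ i < r, (p : ℤ) ^ 2 ∣ f ((e : R) ^ i) → i = 0)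
    (hlin : ¬(p : ℤ) ^ 3 ∣ f ((e : R) ^ r)) {n : ℤ} (hn : f ((e ^ n : Rˣ) : R) = 0) : n = 0 := by
  obtain ⟨i, hir, hi, hdvd⟩ := exists_lt_dvd_map_pow_of_map_zpow_eq_zero (q := p ^ 2) f hr
    (by exact_mod_cast he) hn
  obtain rfl := hres i hir (by exact_mod_cast hdvd)
  obtain ⟨N, rfl⟩ := Int.dvd_of_emod_eq_zero hi.symm
  by_contra h0
  have hfin : FiniteMultiplicity (p : ℤ) N :=
    Int.finiteMultiplicity_iff.mpr ⟨by simpa using hp.ne_one, right_ne_zero_of_mul h0⟩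
  obtain ⟨m, hN, hm⟩ := hfin.exists_eq_pow_mul_and_not_dvd
  rw [hN, zpow_mul, zpow_natCast] at hn
  have hdvd := pow_dvd_mul_map_of_map_zpow_eq_zero f h1 (u := e ^ r) (by simpa using he) hn
  rw [pow_add, mul_assoc, mul_dvd_mul_iff_left (pow_ne_zero _ (by exact_mod_cast hp.ne_zero)),
    Units.val_pow_eq_pow_val] at hdvd
  have hcop : IsCoprime ((p : ℤ) ^ 3) m :=
    ((Nat.prime_iff_prime_int.mp hp).coprime_iff_not_dvd.mpr hm).pow_left
  exact hlin (hcop.dvd_of_dvd_mul_left hdvd)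

end UnitPowers

/-! ### The Thue equation -/

/-- The order `ℤ[θ, θ ^ 2 / 3]` of the cubic field `ℚ(θ)`, where `θ ^ 3 = 9 * θ + 18`: the triple
`⟨a, b, c⟩` stands for `a + b * θ + c * (θ ^ 2 / 3)`. -/
@[ext] structure CubicInt where
  a : ℤ
  b : ℤ
  c : ℤ
  deriving DecidableEq

namespace CubicInt

instance : Zero CubicInt := ⟨⟨0, 0, 0⟩⟩
instance : One CubicInt := ⟨⟨1, 0, 0⟩⟩
instance : Add CubicInt := ⟨fun x y => ⟨x.a + y.a, x.b + y.b, x.c + y.c⟩⟩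
instance : Neg CubicInt := ⟨fun x => ⟨-x.a, -x.b, -x.c⟩⟩
instance : Mul CubicInt := ⟨fun x y =>
  ⟨x.a * y.a + 6 * (x.b * y.c + x.c * y.b),
   x.a * y.b + x.b * y.a + 3 * (x.b * y.c + x.c * y.b) + 2 * x.c * y.c,
   x.a * y.c + x.c * y.a + 3 * x.b * y.b + 3 * x.c * y.c⟩⟩

theorem zero_def : (0 : CubicInt) = ⟨0, 0, 0⟩ := rfl

theorem one_def : (1 : CubicInt) = ⟨1, 0, 0⟩ := rfl

theorem add_def (x y : CubicInt) : x + y = ⟨x.a + y.a, x.b + y.b, x.c + y.c⟩ := rfl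

theorem neg_def (x : CubicInt) : -x = ⟨-x.a, -x.b, -x.c⟩ := rfl

theorem mul_def (x y : CubicInt) : x * y =
    ⟨x.a * y.a + 6 * (x.b * y.c + x.c * y.b),
     x.a * y.b + x.b * y.a + 3 * (x.b * y.c + x.c * y.b) + 2 * x.c * y.c,
     x.a * y.c + x.c * y.a + 3 * x.b * y.b + 3 * x.c * y.c⟩ := rfl

instance : CommRing CubicInt where
  add_assoc x y z := by ext <;> simp only [add_def] <;> ring
  zero_add x := by ext <;> simp only [add_def, zero_def] <;> ring
  add_zero x := by ext <;> simp only [add_def, zero_def] <;> ring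
  add_comm x y := by ext <;> simp only [add_def] <;> ring
  neg_add_cancel x := by ext <;> simp only [add_def, neg_def, zero_def] <;> ring
  mul_assoc x y z := by ext <;> simp only [mul_def] <;> ring
  one_mul x := by ext <;> simp only [mul_def, one_def] <;> ring
  mul_one x := by ext <;> simp only [mul_def, one_def] <;> ring
  mul_comm x y := by ext <;> simp only [mul_def] <;> ring
  left_distrib x y z := by ext <;> simp only [mul_def, add_def] <;> ring
  right_distrib x y z := by ext <;> simp only [mul_def, add_def] <;> ring
  zero_mul x := by ext <;> simp only [mul_def, zero_def] <;> ring
  mul_zero x := by ext <;> simp only [mul_def, zero_def] <;> ring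
  nsmul := nsmulRec
  zsmul := zsmulRec

theorem natCast_def (n : ℕ) : (n : CubicInt) = ⟨n, 0, 0⟩ := by
  induction n with
  | zero => rfl
  | succ n ih => rw [Nat.cast_succ, ih]; simp [add_def, one_def]

theorem natCast_dvd_of_dvd {n : ℕ} {x : CubicInt} (ha : (n : ℤ) ∣ x.a) (hb : (n : ℤ) ∣ x.b)
    (hc : (n : ℤ) ∣ x.c) : (n : CubicInt) ∣ x := by
  obtain ⟨⟨a, ha⟩, ⟨b, hb⟩, ⟨c, hc⟩⟩ := And.intro ha (And.intro hb hc)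
  refine ⟨⟨a, b, c⟩, ?_⟩
  ext <;> simp [mul_def, natCast_def, ha, hb, hc]

/-- The norm of `ℚ(θ)` over `ℚ`. -/
def norm : CubicInt →* ℤ where
  toFun x := x.a ^ 3 + 18 * x.b ^ 3 + 12 * x.c ^ 3 + 6 * x.a ^ 2 * x.c - 9 * x.a * x.b ^ 2 +
    9 * x.a * x.c ^ 2 - 18 * x.b * x.c ^ 2 - 18 * x.a * x.b * x.c
  map_one' := by simp [one_def]
  map_mul' x y := by simp only [mul_def]; ring

theorem norm_apply (x : CubicInt) : norm x =
    x.a ^ 3 + 18 * x.b ^ 3 + 12 * x.c ^ 3 + 6 * x.a ^ 2 * x.c - 9 * x.a * x.b ^ 2 +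
      9 * x.a * x.c ^ 2 - 18 * x.b * x.c ^ 2 - 18 * x.a * x.b * x.c := rfl

/-- The `θ ^ 2 / 3`-coordinate of the product `g * x`, as an additive function of `x`. -/
def coordCMul (g : CubicInt) : CubicInt →+ ℤ where
  toFun x := (g * x).c
  map_zero' := by rw [mul_zero]; rfl
  map_add' x y := by rw [mul_add]; rfl

/-- The unit `1 + θ + θ ^ 2 / 3`. -/
def eta : CubicIntˣ where
  val := ⟨1, 1, 1⟩
  inv := ⟨1, 1, -1⟩
  val_inv := rfl
  inv_val := rfl

theorem norm_eta : norm eta = 1 := by decide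

theorem norm_eta_zpow (n : ℤ) : norm ((eta ^ n : CubicIntˣ) : CubicInt) = 1 := by
  have h : Units.map norm eta = 1 := Units.ext norm_eta
  rw [← Units.coe_map, map_zpow, h, one_zpow, Units.val_one]

theorem eq_of_norm_eq_of_mem_box : ∀ c ∈ Finset.Ioo (-2 : ℤ) 4, ∀ b ∈ Finset.Ioo (-6 : ℤ) 8,
    ∀ a ∈ Finset.Ioo (-25 : ℤ) 25, norm ⟨a, b, c⟩ = 26 →
      (⟨a, b, c⟩ : CubicInt) ∈ [⟨-1, 1, 0⟩, ⟨2, 2, 1⟩, ⟨-4, -1, 2⟩, ⟨5, 3, 2⟩] := by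
  decide +kernel

section RealEmbedding

variable {t : ℝ} (ht : t ^ 3 = 9 * t + 18)

/-- The embedding of `ℤ[θ, θ ^ 2 / 3]` into `ℝ` that sends `θ` to the real root `t`. -/
noncomputable def realEmbedding : CubicInt →+* ℝ where
  toFun x := x.a + x.b * t + x.c * (t ^ 2 / 3)
  map_one' := by simp [one_def]
  map_zero' := by simp [zero_def]
  map_add' x y := by simp only [add_def]; push_cast; ring
  map_mul' x y := by
    simp only [mul_def]
    push_cast
    linear_combination (-(x.b * y.c + x.c * y.b) / 3 - x.c * y.c * t / 9 : ℝ) * ht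

theorem realEmbedding_apply (x : CubicInt) :
    realEmbedding ht x = x.a + x.b * t + x.c * (t ^ 2 / 3) := rfl

theorem norm_eq_realEmbedding_mul (x : CubicInt) :
    (norm x : ℝ) = realEmbedding ht x *
      (((2 * x.a - t * x.b + x.c * (18 - t ^ 2) / 3) / 2) ^ 2 +
        (3 * t ^ 2 / 4 - 9) * (x.b - x.c * t / 3) ^ 2) := by
  have h4 : t ^ 4 = 9 * t ^ 2 + 18 * t := by linear_combination t * ht
  have h6 : t ^ 6 = 81 * t ^ 2 + 324 * t + 324 := by
    linear_combination (t ^ 3 + 9 * t + 18) * ht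
  rw [norm_apply, realEmbedding_apply]
  push_cast
  ring_nf
  simp only [h6, h4, ht]
  ring

theorem exists_root : ∃ t : ℝ, t ^ 3 = 9 * t + 18 ∧ 3.72 < t ∧ t < 3.7201 := by
  have hc : ContinuousOn (fun t : ℝ => t ^ 3 - 9 * t - 18) (Set.Icc 3.72 3.7201) := by fun_prop
  obtain ⟨t, htI, h⟩ := intermediate_value_Ioo (by norm_num) hc
    (show (0 : ℝ) ∈ _ by constructor <;> norm_num)
  exact ⟨t, by linarith only [show t ^ 3 - 9 * t - 18 = 0 from h], htI⟩

variable (h1 : 3.72 < t)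
include h1

theorem realEmbedding_pos_of_norm_pos {x : CubicInt} (hx : 0 < norm x) :
    0 < realEmbedding ht x := by
  have h : (0 : ℝ) < norm x := by exact_mod_cast hx
  rw [norm_eq_realEmbedding_mul ht] at h
  refine pos_of_mul_pos_left h (add_nonneg (sq_nonneg _) (mul_nonneg ?_ (sq_nonneg _)))
  nlinarith only [h1]

theorem abs_le_of_norm_eq {x : CubicInt} (hn : norm x = 26) (hl : 2 ≤ realEmbedding ht x) :
    |2 * x.a - t * x.b + x.c * (18 - t ^ 2) / 3| ≤ 7.22 ∧ |(x.b - x.c * t / 3 : ℝ)| ≤ 3.1 := by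
  have hN := norm_eq_realEmbedding_mul ht x
  rw [hn] at hN
  push_cast at hN
  set p := 2 * x.a - t * x.b + x.c * (18 - t ^ 2) / 3
  set q := x.b - x.c * t / 3
  have ht2 : 13.838 < t ^ 2 := by nlinarith only [h1]
  have hform : (p / 2) ^ 2 + (3 * t ^ 2 / 4 - 9) * q ^ 2 ≤ 13 := by nlinarith only [hN, hl]
  have hq2 : 1.37 * q ^ 2 ≤ (3 * t ^ 2 / 4 - 9) * q ^ 2 :=
    mul_le_mul_of_nonneg_right (by linarith only [ht2]) (sq_nonneg q)
  refine ⟨abs_le_of_sq_le_sq ?_ (by norm_num), abs_le_of_sq_le_sq ?_ (by norm_num)⟩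
  · linarith only [hform, hq2, sq_nonneg q]
  · linarith only [hform, hq2, sq_nonneg p]

variable (h2 : t < 3.7201)
include h2

theorem realEmbedding_eta_mem : realEmbedding ht eta ∈ Set.Ioo (1 : ℝ) 9.335 := by
  have h : realEmbedding ht eta = 1 + t + t ^ 2 / 3 := by simp [realEmbedding_apply, eta]
  rw [h]
  constructor <;> nlinarith only [h1, h2]

theorem c_mem_Ioo_of_norm_eq {x : CubicInt} (hn : norm x = 26) (hl : 2 ≤ realEmbedding ht x)
    (hu : realEmbedding ht x ≤ 18.67) : x.c ∈ Set.Ioo (-2) 4 := by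
  obtain ⟨hp, hq⟩ := abs_le_of_norm_eq ht h1 hn hl
  have hc : x.c * (2 * t ^ 2 - 6) = 2 * realEmbedding ht x -
      (2 * x.a - t * x.b + x.c * (18 - t ^ 2) / 3) - 3 * (t * (x.b - x.c * t / 3)) := by
    rw [realEmbedding_apply]; ring
  have htq : |t * (x.b - x.c * t / 3)| ≤ 3.7201 * 3.1 := by
    rw [abs_mul, abs_of_pos (by linarith only [h1])]
    exact mul_le_mul h2.le hq (abs_nonneg _) (by norm_num)
  rw [abs_le] at hp htq
  have hpos : 21.6 < 2 * t ^ 2 - 6 := by nlinarith only [h1]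
  have hlt : (x.c : ℝ) < 4 := by nlinarith only [hc, hp.1, htq.1, hu, hpos]
  have hgt : (-2 : ℝ) < x.c := by nlinarith only [hc, hp.2, htq.2, hl, hpos]
  exact ⟨by exact_mod_cast hgt, by exact_mod_cast hlt⟩

theorem mem_box_of_norm_eq {x : CubicInt} (hn : norm x = 26) (hl : 2 ≤ realEmbedding ht x)
    (hu : realEmbedding ht x ≤ 18.67) :
    x.c ∈ Finset.Ioo (-2) 4 ∧ x.b ∈ Finset.Ioo (-6) 8 ∧ x.a ∈ Finset.Ioo (-25) 25 := by
  obtain ⟨hp, hq⟩ := abs_le_of_norm_eq ht h1 hn hl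
  have hc := c_mem_Ioo_of_norm_eq ht h1 h2 hn hl hu
  have hc1 : (-1 : ℝ) ≤ x.c := by exact_mod_cast hc.1
  have hc3 : (x.c : ℝ) ≤ 3 := by exact_mod_cast Int.le_of_lt_add_one hc.2
  rw [abs_le] at hp hq
  have hb6 : (-6 : ℝ) < x.b := by nlinarith only [hq.1, hc1, h1, h2]
  have hb8 : (x.b : ℝ) < 8 := by nlinarith only [hq.2, hc3, h1, h2]
  have ht2 : 0 ≤ 18 - t ^ 2 ∧ 18 - t ^ 2 ≤ 4.2 := by constructor <;> nlinarith only [h1, h2]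
  have ha25 : (-25 : ℝ) < x.a := by nlinarith only [hp.1, hb6, hc3, h1, h2, ht2]
  have ha25' : (x.a : ℝ) < 25 := by nlinarith only [hp.2, hb8, hc1, h1, h2, ht2]
  simp only [Finset.mem_Ioo]
  exact ⟨hc, by exact_mod_cast And.intro hb6 hb8, by exact_mod_cast And.intro ha25 ha25'⟩

theorem eq_or_eq_of_norm_eq {x : CubicInt} (hn : norm x = 26) (hl : 2 ≤ realEmbedding ht x)
    (hu : realEmbedding ht x ≤ 18.67) : x = ⟨-1, 1, 0⟩ ∨ x = ⟨2, 2, 1⟩ := by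
  obtain ⟨hc, hb, ha⟩ := mem_box_of_norm_eq ht h1 h2 hn hl hu
  have hx : x ∈ [⟨-1, 1, 0⟩, ⟨2, 2, 1⟩, ⟨-4, -1, 2⟩, ⟨5, 3, 2⟩] :=
    eq_of_norm_eq_of_mem_box x.c hc x.b hb x.a ha hn
  simp only [List.mem_cons, List.not_mem_nil, or_false] at hx
  rcases hx with rfl | rfl | rfl | rfl
  · exact .inl rfl
  · exact .inr rfl
  · exfalso
    rw [realEmbedding_apply] at hl
    norm_num at hl
    nlinarith only [hl, h1, h2]
  · exfalso
    rw [realEmbedding_apply] at hu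
    norm_num at hu
    nlinarith only [hu, h1, h2]

end RealEmbedding

theorem exists_eq_mul_eta_zpow {x : CubicInt} (hn : norm x = 26) :
    ∃ n : ℤ, x = ⟨-1, 1, 0⟩ * ((eta ^ n : CubicIntˣ) : CubicInt) ∨
      x = ⟨2, 2, 1⟩ * ((eta ^ n : CubicIntˣ) : CubicInt) := by
  obtain ⟨t, ht, h1, h2⟩ := exists_root
  obtain ⟨heta1, heta⟩ := realEmbedding_eta_mem ht h1 h2
  have hpos : 0 < realEmbedding ht x := realEmbedding_pos_of_norm_pos ht h1 (by omega)
  obtain ⟨n, hn1, hn2⟩ := exists_mem_Ico_zpow (half_pos hpos) heta1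
  have h0 : 0 < realEmbedding ht eta ^ n := zpow_pos (by linarith only [heta1]) n
  have hval : realEmbedding ht (x * ((eta ^ (-n) : CubicIntˣ) : CubicInt)) =
      realEmbedding ht x / realEmbedding ht eta ^ n := by
    have h := congrArg Units.val (map_zpow (Units.map (realEmbedding ht : CubicInt →* ℝ)) eta (-n))
    rw [Units.coe_map, Units.val_zpow_eq_zpow_val, Units.coe_map] at h
    rw [map_mul, div_eq_mul_inv, ← zpow_neg]
    exact congrArg _ h
  refine ⟨n, ?_⟩
  rw [← Units.mul_inv_eq_iff_eq_mul, ← Units.mul_inv_eq_iff_eq_mul, ← zpow_neg]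
  refine eq_or_eq_of_norm_eq ht h1 h2 ?_ ?_ ?_
  · rw [map_mul, hn, norm_eta_zpow, mul_one]
  · rw [hval, le_div_iff₀ h0]
    linarith only [hn1]
  · rw [zpow_add_one₀ (by linarith only [heta1])] at hn2
    rw [hval, div_le_iff₀ h0]
    nlinarith only [hn2, heta, h0]

theorem natCast_dvd_eta_pow_sub_one :
    ((3 ^ 2 : ℕ) : CubicInt) ∣ (eta : CubicInt) ^ 9 - 1 ∧
      ((7 : ℕ) : CubicInt) ∣ (eta : CubicInt) ^ 12 - 1 :=
  ⟨natCast_dvd_of_dvd (by decide +kernel) (by decide +kernel) (by decide +kernel),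
    natCast_dvd_of_dvd (by decide +kernel) (by decide +kernel) (by decide +kernel)⟩

theorem eq_zero_of_c_mul_eta_zpow_eq_zero {n : ℤ}
    (hn : (⟨-1, 1, 0⟩ * ((eta ^ n : CubicIntˣ) : CubicInt)).c = 0) : n = 0 :=
  eq_zero_of_map_zpow_eq_zero (coordCMul ⟨-1, 1, 0⟩) Nat.prime_three (r := 9) (by decide)
    (by exact_mod_cast natCast_dvd_eta_pow_sub_one.1) (by decide) (by decide +kernel)
    (by decide +kernel) hn

theorem c_mul_eta_zpow_ne_zero (n : ℤ) :
    (⟨2, 2, 1⟩ * ((eta ^ n : CubicIntˣ) : CubicInt)).c ≠ 0 := by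
  intro hn
  obtain ⟨i, hi, -, h⟩ := exists_lt_dvd_map_pow_of_map_zpow_eq_zero (coordCMul ⟨2, 2, 1⟩)
    (r := 12) (by decide) natCast_dvd_eta_pow_sub_one.2 hn
  revert i
  decide +kernel

theorem eq_of_thue_eq {t u : ℤ} (h : t ^ 3 - 9 * t * u ^ 2 + 18 * u ^ 3 = 26) :
    t = -1 ∧ u = 1 := by
  have hn : norm ⟨t, u, 0⟩ = 26 := by rw [norm_apply]; linarith
  obtain ⟨n, hx | hx⟩ := exists_eq_mul_eta_zpow hn
  · obtain rfl := eq_zero_of_c_mul_eta_zpow_eq_zero (n := n) (by rw [← hx])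
    rw [zpow_zero, Units.val_one, mul_one] at hx
    exact ⟨congrArg a hx, congrArg b hx⟩
  · exact absurd (by rw [← hx]) (c_mul_eta_zpow_ne_zero n)

end CubicInt

/-! ### Cubes of ideals of `ℤ√d` -/

section IdealCubes

variable {R : Type*} [CommRing R]

theorem dvd_pow_of_mem_span_pair {a A x b : R} {n : ℕ} (h : a * A = x ^ n)
    (hb : b ∈ Ideal.span {x, a}) : a ∣ b ^ n := by
  obtain ⟨f, g, rfl⟩ := Ideal.mem_span_pair.mp hb
  have hsub : a ∣ (f * x + g * a) ^ n - (f * x) ^ n :=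
    (Dvd.intro_left g (by ring)).trans (sub_dvd_pow_sub_pow (f * x + g * a) (f * x) n)
  have hx : a ∣ (f * x) ^ n := by
    rw [mul_pow, ← h]
    exact (dvd_mul_right a A).mul_left _
  exact (dvd_sub_left hx).mp hsub

theorem pow_dvd_mul_of_mem_pow {I : Ideal R} {b K : R} (hI : ∀ z ∈ I, b ∣ K * z) {n : ℕ} {z : R}
    (hz : z ∈ I ^ n) : b ^ n ∣ K ^ n * z := by
  have hle : Ideal.span {K} * I ≤ Ideal.span {b} := by
    rw [Ideal.span_singleton_mul_le_iff]
    exact fun z hz => Ideal.mem_span_singleton.mpr (hI z hz)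
  have hpow := Ideal.pow_right_mono hle n
  rw [mul_pow, Ideal.span_singleton_pow, Ideal.span_singleton_pow,
    Ideal.span_singleton_mul_le_iff] at hpow
  exact Ideal.mem_span_singleton.mp (hpow z hz)

theorem mul_mem_span_pair_pow_three {a A x : R} (h : a * A = x ^ 3) (u v : R) :
    (x ^ 2 * u + (a - A) ^ 2 * v) * a ∈ Ideal.span {x, a} ^ 3 := by
  have hx : x ∈ Ideal.span {x, a} := Ideal.subset_span (by simp)
  have ha : a ∈ Ideal.span {x, a} := Ideal.subset_span (by simp)
  have hx3 := Ideal.pow_mem_pow hx 3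
  have ha3 := Ideal.pow_mem_pow ha 3
  have hxa : x ^ 2 * a ∈ Ideal.span {x, a} ^ 3 :=
    pow_succ (Ideal.span {x, a}) 2 ▸ Ideal.mul_mem_mul (Ideal.pow_mem_pow hx 2) ha
  have hsum : (x ^ 2 * u + (a - A) ^ 2 * v) * a =
      u * (x ^ 2 * a) + (v * a ^ 3 + (v * A - 2 * v * a) * x ^ 3) := by
    linear_combination (v * A - 2 * v * a) * h
  rw [hsum]
  exact add_mem (Ideal.mul_mem_left _ _ hxa)
    (add_mem (Ideal.mul_mem_left _ _ ha3) (Ideal.mul_mem_left _ _ hx3))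

end IdealCubes

theorem exists_sign_mul_eq_abs (u : ℚ) : ∃ σ : ℤ, (σ : ℚ) ^ 2 = 1 ∧ σ * u = |u| := by
  rcases abs_choice u with h | h
  · exact ⟨1, by norm_num, by rw [h]; simp⟩
  · exact ⟨-1, by norm_num, by rw [h]; simp⟩

/-- Every point `r + s√d` of `ℚ(√d)` has a multiple by some divisor of `K` whose distance to
`ℤ√d`, measured by the norm, is less than `1`. For `K = 1` this says that `ℤ√d` is norm-Euclidean;
in general it makes every ideal of `ℤ√d` principal up to the factor `K`. -/
def IsEuclideanUpTo (d K : ℤ) : Prop :=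
  ∀ r s : ℚ, ∃ k : ℤ, k ∣ K ∧ ∃ x y : ℤ, |(k * r - x) ^ 2 - d * (k * s - y) ^ 2| < 1

namespace IsEuclideanUpTo

theorem six : IsEuclideanUpTo 6 1 := by
  intro r s
  refine ⟨1, dvd_rfl, ?_⟩
  have hv : |s - round s| ≤ 1 / 2 := abs_sub_round s
  have hu : |r - round r| ≤ 1 / 2 := abs_sub_round r
  set v := s - round s with hvd
  set u := r - round r with hud
  have hv2 : v ^ 2 ≤ (1 / 2) ^ 2 := sq_le_sq' (neg_le_of_abs_le hv) (le_of_abs_le hv)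
  have hu2 : u ^ 2 ≤ (1 / 2) ^ 2 := sq_le_sq' (neg_le_of_abs_le hu) (le_of_abs_le hu)
  by_cases h : 6 * v ^ 2 < 1 + u ^ 2
  · refine ⟨round r, round s, ?_⟩
    rw [Int.cast_one, one_mul, one_mul, ← hvd, ← hud, abs_lt]
    constructor <;> push_cast <;> linarith [sq_nonneg v]
  · obtain ⟨σ, hσ, hσu⟩ := exists_sign_mul_eq_abs u
    have hne : 6 * v ^ 2 ≠ 5 / 4 := fun h5 =>
      have h30 : IsSquare ((30 : ℕ) : ℚ) := ⟨12 * v, by push_cast; linear_combination (-24) * h5⟩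
      absurd (Rat.isSquare_natCast_iff.mp h30) (by decide +kernel)
    have hlt : u ^ 2 + 2 * |u| < 6 * v ^ 2 := by
      refine lt_of_le_of_ne (by linarith) fun heq => hne ?_
      have habs : |u| = 1 / 2 := by linarith
      rw [← heq, ← sq_abs u, habs]
      norm_num
    -- Moving away from `r` by one more unit makes up for the large `6 * v ^ 2`.
    refine ⟨round r - σ, round s, ?_⟩
    push_cast
    rw [one_mul, one_mul, ← hvd, show r - (round r - σ) = u + σ by rw [hud]; ring, abs_lt]
    constructor <;> nlinarith only [abs_nonneg u, hlt, hσ, hσu, hv2, sq_nonneg u]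

theorem neg_six : IsEuclideanUpTo (-6) 2 := by
  intro r s
  have hv : |s - round s| ≤ 1 / 2 := abs_sub_round s
  by_cases h : 8 * (s - round s) ^ 2 < 1
  · refine ⟨1, one_dvd _, round r, round s, ?_⟩
    have hu := abs_le.mp (abs_sub_round r)
    push_cast
    rw [one_mul, one_mul, abs_lt]
    constructor <;> nlinarith only [hu, h, sq_nonneg (s - round s), sq_nonneg (r - round r)]
  · obtain ⟨σ, hσ, hσv⟩ := exists_sign_mul_eq_abs (s - round s)
    have hu := abs_le.mp (abs_sub_round (2 * r))
    refine ⟨2, dvd_rfl, round (2 * r), 2 * round s + σ, ?_⟩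
    have habs : 0.35 ≤ |s - round s| := by
      nlinarith only [h, sq_abs (s - round s), abs_nonneg (s - round s)]
    have hsq : (2 * s - (2 * round s + σ)) ^ 2 = (1 - 2 * |s - round s|) ^ 2 := by
      rw [← hσv]
      linear_combination (1 - 4 * (s - round s) ^ 2) * hσ
    push_cast
    rw [hsq, abs_lt]
    constructor <;> nlinarith only [hu, hv, habs, sq_nonneg (2 * r - round (2 * r))]

variable {d K : ℤ} (h : IsEuclideanUpTo d K)
include h

theorem exists_abs_norm_sub_lt (a : ℤ√d) {b : ℤ√d} (hb : b.norm ≠ 0) :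
    ∃ k : ℤ, k ∣ K ∧ ∃ q : ℤ√d, |((k : ℤ√d) * a - q * b).norm| < |b.norm| := by
  obtain ⟨k, hk, x, y, hxy⟩ := h ((a * star b).re / b.norm) ((a * star b).im / b.norm)
  refine ⟨k, hk, ⟨x, y⟩, ?_⟩
  have hprod : ((k : ℤ√d) * a - ⟨x, y⟩ * b).norm * b.norm =
      (k * (a * star b).re - x * b.norm) ^ 2 - d * (k * (a * star b).im - y * b.norm) ^ 2 := by
    simp only [Zsqrtd.norm_def, Zsqrtd.re_sub, Zsqrtd.im_sub, Zsqrtd.re_mul, Zsqrtd.im_mul,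
      Zsqrtd.re_star, Zsqrtd.im_star, Zsqrtd.re_intCast, Zsqrtd.im_intCast]
    ring
  have hb' : (b.norm : ℚ) ≠ 0 := by exact_mod_cast hb
  have hquot : (k * ((a * star b).re / b.norm : ℚ) - x) ^ 2 -
      d * (k * ((a * star b).im / b.norm) - y) ^ 2 =
        ((k : ℤ√d) * a - ⟨x, y⟩ * b).norm / b.norm := by
    have hprod' := congrArg (Int.cast : ℤ → ℚ) hprod
    push_cast at hprod'
    field_simp
    linear_combination -hprod'
  rw [hquot, abs_div, div_lt_one (abs_pos.mpr hb')] at hxy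
  exact_mod_cast hxy

variable (hd : ∀ n : ℤ, d ≠ n * n)
include hd

theorem exists_mem_forall_dvd_mul (I : Ideal (ℤ√d)) : ∃ b ∈ I, ∀ z ∈ I, b ∣ K * z := by
  by_cases hI : I = ⊥
  · subst hI
    exact ⟨0, zero_mem _, fun z hz => by simp [Ideal.mem_bot.mp hz]⟩
  obtain ⟨b, ⟨hbI, hb0⟩, hmin⟩ :=
    exists_minimalFor_of_wellFoundedLT (fun z : ℤ√d => z ∈ I ∧ z ≠ 0) (fun z => z.norm.natAbs)
      (Submodule.exists_mem_ne_zero_of_ne_bot hI)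
  refine ⟨b, hbI, fun z hz => ?_⟩
  obtain ⟨k, hk, q, hlt⟩ := h.exists_abs_norm_sub_lt z ((Zsqrtd.norm_eq_zero hd b).not.mpr hb0)
  have hmem : (k : ℤ√d) * z - q * b ∈ I := sub_mem (I.mul_mem_left _ hz) (I.mul_mem_left _ hbI)
  have hzero : (k : ℤ√d) * z - q * b = 0 := by
    by_contra hne
    have hle := hmin ⟨hmem, hne⟩
    zify at hle
    exact (hle hlt.le).not_gt hlt
  refine dvd_trans ⟨q, ?_⟩ (mul_dvd_mul_right ((Zsqrtd.intCast_dvd_intCast k K).mpr hk) z)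
  rw [sub_eq_zero.mp hzero, mul_comm]

theorem exists_cube_eq_mul {z : ℤ√d} {X : ℤ} (hX : X ≠ 0) (hz : z.norm = X ^ 3) :
    ∃ b c : ℤ√d, b ^ 3 = z * c ∧ c ∣ (K ^ 3 * Int.gcd (X ^ 2) (4 * d * z.im ^ 2) : ℤ) := by
  have hzX : z * star z = (X : ℤ√d) ^ 3 := by
    rw [← Zsqrtd.norm_eq_mul_conj, hz, Int.cast_pow]
  obtain ⟨b, hb, hbI⟩ := h.exists_mem_forall_dvd_mul hd (Ideal.span {(X : ℤ√d), z})
  obtain ⟨c, hc⟩ := dvd_pow_of_mem_span_pair hzX hb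
  refine ⟨b, c, hc, ?_⟩
  have hgcd : ((Int.gcd (X ^ 2) (4 * d * z.im ^ 2) : ℤ) : ℤ√d) =
      X ^ 2 * (Int.gcdA (X ^ 2) (4 * d * z.im ^ 2) : ℤ) +
        (z - star z) ^ 2 * (Int.gcdB (X ^ 2) (4 * d * z.im ^ 2) : ℤ) := by
    have hsq : (z - star z) ^ 2 = ((4 * d * z.im ^ 2 : ℤ) : ℤ√d) := by
      ext
      · simp [sq]; ring
      · simp [sq]
    rw [hsq, Int.gcd_eq_gcd_ab]
    push_cast
    ring
  have hdvd := pow_dvd_mul_of_mem_pow hbI (mul_mem_span_pair_pow_three hzX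
    (Int.gcdA (X ^ 2) (4 * d * z.im ^ 2) : ℤ√d) (Int.gcdB (X ^ 2) (4 * d * z.im ^ 2)))
  rw [← hgcd, hc] at hdvd
  obtain ⟨w, hw⟩ := hdvd
  refine ⟨w, Zsqrtd.eq_of_smul_eq_smul_left (pow_ne_zero 3 hX) ?_⟩
  push_cast
  linear_combination
    star z * hw - (K ^ 3 * (Int.gcd (X ^ 2) (4 * d * z.im ^ 2) : ℤ) - c * w) * hzX

end IsEuclideanUpTo

/-! ### Units times cubes in `ℤ√d` -/

section RamifiedDivision

variable {d : ℤ}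

theorem eq_of_mul_eq_mul_left_of_norm_ne_zero {a b c : ℤ√d} (ha : a.norm ≠ 0)
    (h : a * b = a * c) : b = c := by
  apply Zsqrtd.eq_of_smul_eq_smul_left ha
  rw [Zsqrtd.norm_eq_mul_conj]
  linear_combination star a * h

theorem dvd_re_of_dvd_norm (hd : Squarefree d) {m : ℤ} (hm : m ∣ d) {w : ℤ√d}
    (hw : m ∣ w.norm) : m ∣ w.re := by
  rw [← (hd.squarefree_of_dvd hm).dvd_pow_iff_dvd two_ne_zero]
  have hsq : w.re ^ 2 = w.norm + d * w.im ^ 2 := by rw [Zsqrtd.norm_def]; ring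
  rw [hsq]
  exact hw.add (hm.mul_right _)

-- The primes dividing `d` ramify, which is why the norm alone detects divisibility by `δ`.
theorem dvd_of_norm_dvd_norm (hd : Squarefree d) {δ w : ℤ√d} (hδ : δ.norm ∣ d)
    (hw : δ.norm ∣ w.norm) : δ ∣ w := by
  have hδre := dvd_re_of_dvd_norm hd hδ dvd_rfl
  have hwre := dvd_re_of_dvd_norm hd hδ hw
  have hmul : (δ.norm : ℤ√d) ∣ star δ * w := by
    rw [Zsqrtd.intCast_dvd]
    simp only [Zsqrtd.re_mul, Zsqrtd.im_mul, Zsqrtd.re_star, Zsqrtd.im_star]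
    exact ⟨(hδre.mul_right _).add ((hδ.mul_right _).mul_right _),
      (hδre.mul_right _).add (hwre.mul_left _)⟩
  obtain ⟨q, hq⟩ := hmul
  have hne : (star δ).norm ≠ 0 := by
    rw [Zsqrtd.norm_conj]
    exact ne_zero_of_dvd_ne_zero hd.ne_zero hδ
  refine ⟨q, eq_of_mul_eq_mul_left_of_norm_ne_zero hne ?_⟩
  rw [hq, Zsqrtd.norm_eq_mul_conj]
  ring

theorem pow_dvd_of_norm_pow_dvd_norm (hd : Squarefree d) {δ : ℤ√d} (hδ : δ.norm ∣ d) (n : ℕ)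
    {w : ℤ√d} (hw : δ.norm ^ n ∣ w.norm) : δ ^ n ∣ w := by
  induction n generalizing w with
  | zero => simp
  | succ n ih =>
    obtain ⟨v, rfl⟩ := dvd_of_norm_dvd_norm hd hδ ((dvd_pow_self _ n.succ_ne_zero).trans hw)
    rw [Zsqrtd.norm_mul, pow_succ',
      mul_dvd_mul_iff_left (ne_zero_of_dvd_ne_zero hd.ne_zero hδ)] at hw
    rw [pow_succ']
    exact mul_dvd_mul_left δ (ih hw)

theorem exists_units_mul_cube_of_norm_eq (hd : Squarefree d) {δ z b c : ℤ√d} {X k : ℤ}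
    (hδ : δ.norm ∣ d) (hk : Associated δ.norm k) (hbc : b ^ 3 = z * c) (hb : b.norm = X * k)
    (hc : c.norm = k ^ 3) : ∃ (e : (ℤ√d)ˣ) (β : ℤ√d), z = e * β ^ 3 := by
  have hδ0 : δ.norm ≠ 0 := ne_zero_of_dvd_ne_zero hd.ne_zero hδ
  obtain ⟨β, rfl⟩ := dvd_of_norm_dvd_norm hd hδ (hb ▸ hk.dvd.mul_left X)
  obtain ⟨u, rfl⟩ := pow_dvd_of_norm_pow_dvd_norm hd hδ 3 (hc ▸ (hk.pow_pow (n := 3)).dvd)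
  have hδ3 : (δ ^ 3).norm = δ.norm ^ 3 := map_pow Zsqrtd.normMonoidHom δ 3
  have hδ30 : (δ ^ 3).norm ≠ 0 := hδ3 ▸ pow_ne_zero 3 hδ0
  have hu : IsUnit u := by
    rw [← Zsqrtd.norm_eq_one_iff, ← Int.isUnit_iff_natAbs_eq]
    refine isUnit_of_associated_mul (p := (δ ^ 3).norm) ?_ hδ30
    rw [← Zsqrtd.norm_mul, hc, hδ3]
    exact hk.symm.pow_pow
  obtain ⟨e, rfl⟩ := hu
  have hβ : β ^ 3 = z * e := eq_of_mul_eq_mul_left_of_norm_ne_zero hδ30 (by linear_combination hbc)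
  exact ⟨e⁻¹, β, by rw [hβ, mul_comm, mul_assoc, Units.mul_inv, mul_one]⟩

end RamifiedDivision

theorem exists_norm_associated_of_dvd_six {k : ℤ} (hk : k ∣ 6) :
    ∃ δ : ℤ√6, δ.norm ∣ 6 ∧ Associated δ.norm k := by
  have hk' : k.natAbs ∈ Nat.divisors 6 := by
    simpa using Int.natAbs_dvd_natAbs.mpr hk
  have hex : ∀ m ∈ Nat.divisors 6, ∃ δ ∈ [(1 : ℤ√6), ⟨2, 1⟩, ⟨3, 1⟩, ⟨0, 1⟩],
      δ.norm ∣ 6 ∧ δ.norm.natAbs = m := by decide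
  obtain ⟨δ, -, hδ, hδk⟩ := hex _ hk'
  exact ⟨δ, hδ, Int.associated_iff_natAbs.mpr hδk⟩

theorem squarefree_six : Squarefree (6 : ℤ) := by
  rw [← Int.squarefree_natAbs]
  exact (Nat.squarefree_mul (by norm_num)).mpr
    ⟨Nat.prime_two.squarefree, Nat.prime_three.squarefree⟩

theorem exists_units_mul_cube_of_cube_eq_mul {z b c : ℤ√6} {X : ℤ} (hX : X ≠ 0)
    (hz : z.norm = X ^ 3) (hbc : b ^ 3 = z * c) (hc : c ∣ 36) :
    ∃ (e : (ℤ√6)ˣ) (β : ℤ√6), z = e * β ^ 3 := by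
  have hnorm : b.norm ^ 3 = X ^ 3 * c.norm := by
    have h := congrArg Zsqrtd.normMonoidHom hbc
    rw [map_pow, map_mul] at h
    exact h.trans (congrArg (· * c.norm) hz)
  obtain ⟨k, hk⟩ := (Int.pow_dvd_pow_iff three_ne_zero).mp (Dvd.intro _ hnorm.symm)
  have hck : c.norm = k ^ 3 := mul_left_cancel₀ (pow_ne_zero 3 hX) (by rw [← hnorm, hk, mul_pow])
  have hk1296 : k ^ 3 ∣ 1296 := by
    obtain ⟨c', hc'⟩ := hc
    have h := congrArg Zsqrtd.norm hc'
    rw [Zsqrtd.norm_mul, hck] at h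
    exact ⟨_, h⟩
  have hk6 : k ∣ 6 := by
    have hk_abs : k.natAbs ^ 3 ∣ 1296 := by
      rw [← Int.natAbs_pow]
      exact Int.natAbs_dvd_natAbs.mpr hk1296
    have hlt : k.natAbs < 11 :=
      lt_of_pow_lt_pow_left₀ 3 (by norm_num) ((Nat.le_of_dvd (by norm_num) hk_abs).trans_lt
        (by norm_num))
    have hall : ∀ m < 11, m ^ 3 ∣ 1296 → m ∣ 6 := by decide
    exact Int.natAbs_dvd_natAbs.mp (hall _ hlt hk_abs)
  obtain ⟨δ, hδ, hδk⟩ := exists_norm_associated_of_dvd_six hk6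
  exact exists_units_mul_cube_of_norm_eq squarefree_six hδ hδk hbc hk hck

theorem norm_units_eq_one (e : (ℤ√6)ˣ) : (e : ℤ√6).norm = 1 := by
  refine (Int.isUnit_iff.mp ?_).resolve_right fun h => ?_
  · rw [Int.isUnit_iff_natAbs_eq, Zsqrtd.norm_eq_one_iff]
    exact e.isUnit
  · have hmod := congrArg (Int.cast : ℤ → ZMod 3) h
    have hne : ∀ x y : ZMod 3, x * x - 6 * y * y ≠ -1 := by decide
    rw [Zsqrtd.norm_def] at hmod
    push_cast at hmod
    exact hne _ _ hmod

theorem isFundamental_five_two :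
    Pell.IsFundamental (d := 6) (Pell.Solution₁.mk 5 2 (by norm_num)) := by
  refine ⟨by simp, by simp, fun {a} ha => ?_⟩
  rw [Pell.Solution₁.x_mk]
  by_contra! hlt
  have hprop := a.prop
  generalize a.x = x at *
  generalize a.y = y at *
  have hy1 : y < 2 := by nlinarith
  have hy2 : -2 < y := by nlinarith
  interval_cases x <;> interval_cases y <;> omega

theorem exists_zpow_eq_mul_cube {G : Type*} [Group G] (g : G) (n : ℤ) :
    ∃ E ∈ [1, g, g⁻¹], ∃ B, g ^ n = E * B ^ 3 := by
  suffices ∃ m r : ℤ, g ^ r ∈ [1, g, g⁻¹] ∧ n = r + m * 3 by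
    obtain ⟨m, r, hr, rfl⟩ := this
    exact ⟨g ^ r, hr, g ^ m, by rw [zpow_add, zpow_mul, zpow_ofNat]⟩
  obtain h | h | h : n % 3 = 0 ∨ n % 3 = 1 ∨ n % 3 = 2 := by omega
  · exact ⟨n / 3, 0, by simp, by omega⟩
  · exact ⟨n / 3, 1, by simp, by omega⟩
  · exact ⟨n / 3 + 1, -1, by simp, by omega⟩

theorem exists_units_eq_mul_cube (e : (ℤ√6)ˣ) :
    ∃ E ∈ [(1 : ℤ√6), ⟨5, 2⟩, ⟨5, -2⟩], ∃ B : ℤ√6, (e : ℤ√6) = E * B ^ 3 := by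
  set ε : Pell.Solution₁ 6 := Pell.Solution₁.mk 5 2 (by norm_num)
  obtain ⟨n, hn⟩ := isFundamental_five_two.eq_zpow_or_neg_zpow
    ⟨e, Zsqrtd.norm_eq_one_iff_mem_unitary.mp (norm_units_eq_one e)⟩
  obtain ⟨E, hE, B, hB⟩ := exists_zpow_eq_mul_cube ε n
  have hval : ((ε ^ n : Pell.Solution₁ 6) : ℤ√6) = E * (B : ℤ√6) ^ 3 := congrArg Subtype.val hB
  have hE' : (E : ℤ√6) ∈ [(1 : ℤ√6), ⟨5, 2⟩, ⟨5, -2⟩] := List.mem_map_of_mem (f := Subtype.val) hE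
  refine ⟨E, hE', ?_⟩
  rcases hn with hn | hn
  · exact ⟨B, (congrArg Subtype.val hn).trans hval⟩
  · refine ⟨-B, (congrArg Subtype.val hn).trans ?_⟩
    rw [Odd.neg_pow (by decide), mul_neg, ← hval]
    rfl

/-! ### The Mordell equations -/

section LocalConditions

theorem not_dvd_of_forall_sq_ne {X Y n m : ℤ} {q : ℕ} (h : Y ^ 2 = X ^ 3 + n)
    (hq : (q : ℤ) ∣ m ^ 3) (hn : ∀ y : ZMod q, y ^ 2 ≠ n) : ¬ m ∣ X := by
  intro hm
  have hX : ((X ^ 3 : ℤ) : ZMod q) = 0 :=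
    (ZMod.intCast_zmod_eq_zero_iff_dvd _ q).mpr (hq.trans (pow_dvd_pow_of_dvd hm 3))
  have hmod := congrArg (Int.cast : ℤ → ZMod q) h
  rw [Int.cast_add, hX, zero_add, Int.cast_pow] at hmod
  exact hn _ hmod

theorem gcd_sq_dvd_sq {X N : ℤ} {m : ℕ} (h : Int.gcd X N ∣ m) : Int.gcd (X ^ 2) N ∣ m ^ 2 := by
  rw [sq, sq]
  exact (Int.gcd_mul_left_dvd_mul_gcd ..).trans (mul_dvd_mul h h)

theorem gcd_dvd_six {X : ℤ} (h4 : ¬ 4 ∣ X) (h9 : ¬ 9 ∣ X) (h13 : ¬ 13 ∣ X) :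
    Int.gcd X 146016 ∣ 6 := by
  have hX : ∀ m : ℕ, ¬ (m : ℤ) ∣ X → ¬ m ∣ Int.gcd X 146016 := fun m hm h =>
    hm ((Int.natCast_dvd_natCast.mpr h).trans (Int.gcd_dvd_left ..))
  have hcop : (Int.gcd X 146016).Coprime (13 ^ 2) :=
    (((Nat.Prime.coprime_iff_not_dvd (by norm_num)).mpr (hX 13 h13)).symm).pow_right 2
  have h864 : Int.gcd X 146016 ∈ Nat.divisors 864 := by
    rw [Nat.mem_divisors]
    exact ⟨hcop.dvd_of_dvd_mul_right (Int.natCast_dvd_natCast.mp (Int.gcd_dvd_right ..)),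
      by norm_num⟩
  have hall : ∀ g ∈ Nat.divisors 864, ¬ 4 ∣ g → ¬ 9 ∣ g → g ∣ 6 := by decide +kernel
  exact hall _ h864 (hX 4 h4) (hX 9 h9)

theorem gcd_dvd_six_of_sq_eq_cube_add {X Y n : ℤ} (hn : n = 36504 ∨ n = -36504)
    (h : Y ^ 2 = X ^ 3 + n) : Int.gcd X 146016 ∣ 6 := by
  obtain rfl | rfl := hn <;>
  exact gcd_dvd_six (not_dvd_of_forall_sq_ne (q := 16) h (by norm_num) (by decide +kernel))
    (not_dvd_of_forall_sq_ne (q := 81) h (by norm_num) (by decide +kernel))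
    (not_dvd_of_forall_sq_ne (q := 2197) h (by norm_num) (by decide +kernel))

theorem not_three_dvd_of_sq_eq_cube_sub {X Y : ℤ} (h : Y ^ 2 = X ^ 3 - 36504) : ¬ 3 ∣ X := by
  rintro ⟨x, rfl⟩
  obtain ⟨y, rfl⟩ : 3 ∣ Y := Int.prime_three.dvd_of_dvd_pow (n := 2) ⟨9 * x ^ 3 - 12168, by
    linear_combination h⟩
  obtain ⟨w, rfl⟩ : 3 ∣ y := Int.prime_three.dvd_of_dvd_pow (n := 2) ⟨x ^ 3 - 1352, by linarith⟩
  have hmod : ((3 * w ^ 2 : ℤ) : ZMod 9) = (x ^ 3 - 1352 : ℤ) := congrArg _ (by linarith)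
  have hne : ∀ a b : ZMod 9, 3 * a ^ 2 ≠ b ^ 3 - 1352 := by decide
  push_cast at hmod
  exact hne _ _ hmod

theorem gcd_dvd_two_of_sq_eq_cube_sub {X Y : ℤ} (h : Y ^ 2 = X ^ 3 - 36504) :
    Int.gcd X 146016 ∣ 2 := by
  refine Nat.Coprime.dvd_of_dvd_mul_right (n := 3) ?_ (gcd_dvd_six_of_sq_eq_cube_add (Or.inr rfl) h)
  refine Nat.Coprime.symm ((Nat.Prime.coprime_iff_not_dvd Nat.prime_three).mpr fun h3 => ?_)
  exact not_three_dvd_of_sq_eq_cube_sub h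
    ((Int.natCast_dvd_natCast.mpr h3).trans (Int.gcd_dvd_left ..))

end LocalConditions

theorem im_eq_zero_of_dvd_thirty_two {c : ℤ√(-6)} (hc : c ∣ 32) : c.im = 0 := by
  have hnorm : c.re ^ 2 + 6 * c.im ^ 2 ∣ 1024 := by
    have h : c.norm ∣ 1024 := map_dvd Zsqrtd.normMonoidHom hc
    rwa [Zsqrtd.norm_def, (by ring : c.re * c.re - -6 * c.im * c.im = c.re ^ 2 + 6 * c.im ^ 2)] at h
  have hle := Int.le_of_dvd (by norm_num) hnorm
  have hre : c.re ∈ Finset.Icc (-32) 32 := by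
    rw [Finset.mem_Icc]
    constructor <;> nlinarith [sq_nonneg c.im]
  have him : c.im ∈ Finset.Icc (-13) 13 := by
    rw [Finset.mem_Icc]
    constructor <;> nlinarith [sq_nonneg c.re]
  have hall : ∀ p ∈ Finset.Icc (-32 : ℤ) 32, ∀ q ∈ Finset.Icc (-13 : ℤ) 13,
      p ^ 2 + 6 * q ^ 2 ∣ 1024 → q = 0 := by decide +kernel
  exact hall _ hre _ him hnorm

theorem mul_sq_sub_two_mul_sq_ne {P Q p : ℤ} (hp : p ∣ 32) : Q * (P ^ 2 - 2 * Q ^ 2) ≠ 26 * p := by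
  intro h
  obtain ⟨q, rfl⟩ : 13 ∣ Q := by
    have hmod := congrArg (Int.cast : ℤ → ZMod 13) h
    push_cast at hmod
    have hall : ∀ a b : ZMod 13, a * (b ^ 2 - 2 * a ^ 2) = 0 → a = 0 := by decide
    refine (ZMod.intCast_zmod_eq_zero_iff_dvd Q 13).mp (hall _ P ?_)
    rw [hmod, (by decide : (26 : ZMod 13) = 0), zero_mul]
  have hprod : q * (P ^ 2 - 338 * q ^ 2) ∣ 64 := by
    have hq : q * (P ^ 2 - 338 * q ^ 2) = 2 * p := by linarith
    exact hq ▸ mul_dvd_mul_left 2 hp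
  have hmem : ∀ n : ℤ, n ∣ 64 → n ∈ Finset.Icc (-64) 64 := fun n hn =>
    Finset.mem_Icc.mpr ⟨neg_le.mp (Int.le_of_dvd (by norm_num) (neg_dvd.mpr hn)),
      Int.le_of_dvd (by norm_num) hn⟩
  have hall : ∀ a ∈ Finset.Icc (-64 : ℤ) 64, ∀ m ∈ Finset.Icc (-64 : ℤ) 64, a ∣ 64 → m ∣ 64 →
      ¬ IsSquare (338 * a ^ 2 + m) := by decide +kernel
  have hq64 := dvd_of_mul_right_dvd hprod
  have hm64 := dvd_of_mul_left_dvd hprod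
  exact hall q (hmem _ hq64) _ (hmem _ hm64) hq64 hm64 ⟨P, by ring⟩

theorem sq_ne_cube_sub (X Y : ℤ) : Y ^ 2 ≠ X ^ 3 - 36504 := by
  intro h
  have hX : X ≠ 0 := by
    rintro rfl
    exact absurd (gcd_dvd_two_of_sq_eq_cube_sub h) (by decide)
  have hd : ∀ n : ℤ, -6 ≠ n * n := fun n hn => by linarith [mul_self_nonneg n]
  have hz : (⟨Y, 78⟩ : ℤ√(-6)).norm = X ^ 3 := by
    rw [Zsqrtd.norm_def]
    linarith
  have hgcd : Int.gcd (X ^ 2) (4 * (-6) * 78 ^ 2) ∣ 4 := by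
    simpa using gcd_sq_dvd_sq (gcd_dvd_two_of_sq_eq_cube_sub h)
  obtain ⟨b, c, hbc, hc⟩ := IsEuclideanUpTo.neg_six.exists_cube_eq_mul hd hX hz
  have hc32 : c ∣ (32 : ℤ) :=
    hc.trans ((Zsqrtd.intCast_dvd_intCast _ _).mpr
      (mul_dvd_mul_left (2 ^ 3) (Int.natCast_dvd_natCast.mpr hgcd)))
  have him : c.im = 0 := im_eq_zero_of_dvd_thirty_two hc32
  have hre : c.re ∣ 32 := by
    rw [← Zsqrtd.intCast_dvd_intCast (d := -6)]
    exact (Zsqrtd.ext rfl him : c = (c.re : ℤ√(-6))) ▸ hc32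
  refine mul_sq_sub_two_mul_sq_ne (P := b.re) (Q := b.im) hre ?_
  have hbim := congrArg Zsqrtd.im hbc
  simp only [pow_succ, pow_zero, one_mul, Zsqrtd.im_mul, Zsqrtd.re_mul, him] at hbim
  linarith

theorem mul_sq_add_two_mul_sq_ne (P Q : ℤ) : Q * (P ^ 2 + 2 * Q ^ 2) ≠ 26 := by
  intro h
  have hQ0 : 0 < Q := by
    by_contra! hQ
    nlinarith [sq_nonneg P, sq_nonneg Q]
  have hQ3 : Q < 3 := by
    by_contra! hQ
    nlinarith [sq_nonneg P, sq_nonneg Q, mul_nonneg hQ0.le (sq_nonneg P)]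
  have hP : P < 6 := by nlinarith
  have hP' : -6 < P := by nlinarith
  interval_cases Q <;> interval_cases P <;> omega

theorem re_eq_of_eq_five_two_mul_cube {z B : ℤ√6} (hz : z = ⟨5, 2⟩ * B ^ 3) (him : z.im = 78) :
    z.re = 252 := by
  subst hz
  have hthue : 5 * (3 * B.re ^ 2 * B.im + 6 * B.im ^ 3) + 2 * (B.re ^ 3 + 18 * B.re * B.im ^ 2) =
      78 := by
    rw [← him]
    simp only [pow_succ, pow_zero, one_mul, Zsqrtd.im_mul, Zsqrtd.re_mul]
    ring
  obtain ⟨w, hw⟩ : 3 ∣ B.re := Int.prime_three.dvd_of_dvd_pow (n := 3)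
    ⟨B.re ^ 3 - 26 + 5 * B.re ^ 2 * B.im + 10 * B.im ^ 3 + 12 * B.re * B.im ^ 2, by
      linear_combination -hthue⟩
  obtain ⟨ht, hu⟩ := CubicInt.eq_of_thue_eq (t := B.im) (u := w + B.im) (by
    rw [hw] at hthue
    linarith)
  have hB : B = ⟨6, -1⟩ := Zsqrtd.ext (show B.re = 6 by omega) ht
  rw [hB]
  rfl

theorem re_eq_or_of_eq_units_mul_cube {z : ℤ√6} {e : (ℤ√6)ˣ} {β : ℤ√6} (hz : z = e * β ^ 3)
    (him : z.im = 78) : z.re = 252 ∨ z.re = -252 := by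
  obtain ⟨E, hE, B, hB⟩ := exists_units_eq_mul_cube e
  rw [hB, mul_assoc, ← mul_pow] at hz
  generalize B * β = γ at hz
  simp only [List.mem_cons, List.not_mem_nil, or_false] at hE
  obtain rfl | rfl | rfl := hE
  · refine absurd ?_ (mul_sq_add_two_mul_sq_ne γ.re γ.im)
    have h := congrArg Zsqrtd.im hz
    simp only [pow_succ, pow_zero, one_mul, Zsqrtd.im_mul, Zsqrtd.re_mul, him] at h
    linarith
  · exact Or.inl (re_eq_of_eq_five_two_mul_cube hz him)
  · right
    have hconj : -star z = ⟨5, 2⟩ * (-star γ) ^ 3 := by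
      rw [hz, star_mul', star_pow, Odd.neg_pow (by decide), mul_neg]
      rfl
    have h := re_eq_of_eq_five_two_mul_cube hconj (by simpa using him)
    rw [Zsqrtd.re_neg, Zsqrtd.re_star] at h
    linarith

theorem eq_or_of_sq_eq_cube_add {X Y : ℤ} (h : Y ^ 2 = X ^ 3 + 36504) :
    X = 30 ∧ (Y = 252 ∨ Y = -252) := by
  have hX : X ≠ 0 := by
    rintro rfl
    exact absurd (gcd_dvd_six_of_sq_eq_cube_add (Or.inl rfl) h) (by decide)
  have hd : ∀ n : ℤ, 6 ≠ n * n := fun n hn =>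
    (by decide +kernel : ¬ IsSquare (6 : ℤ)) ⟨n, hn⟩
  have hz : (⟨Y, 78⟩ : ℤ√6).norm = X ^ 3 := by
    rw [Zsqrtd.norm_def]
    linarith
  have hgcd : Int.gcd (X ^ 2) (4 * 6 * 78 ^ 2) ∣ 36 :=
    gcd_sq_dvd_sq (gcd_dvd_six_of_sq_eq_cube_add (Or.inl rfl) h)
  obtain ⟨b, c, hbc, hc⟩ := IsEuclideanUpTo.six.exists_cube_eq_mul hd hX hz
  have hc36 : c ∣ (36 : ℤ) :=
    hc.trans ((Zsqrtd.intCast_dvd_intCast _ _).mpr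
      (mul_dvd_mul_left (1 ^ 3) (Int.natCast_dvd_natCast.mpr hgcd)))
  obtain ⟨e, β, hβ⟩ := exists_units_mul_cube_of_cube_eq_mul hX hz hbc hc36
  have hY : Y = 252 ∨ Y = -252 := re_eq_or_of_eq_units_mul_cube hβ rfl
  have hX3 : X ^ 3 = 30 ^ 3 := by rcases hY with rfl | rfl <;> linarith
  exact ⟨(Odd.pow_injective (by decide)) hX3, hY⟩

theorem stmt_13 :
    (∀ X Y : ℤ, Y ^ 2 = X ^ 3 + 36504 ↔ (X = 30 ∧ Y = 252) ∨ (X = 30 ∧ Y = -252)) ∧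
    (¬ ∃ X Y : ℤ, Y ^ 2 = X ^ 3 - 36504) := by
  refine ⟨fun X Y => ⟨fun h => ?_, ?_⟩, fun ⟨X, Y, h⟩ => sq_ne_cube_sub X Y h⟩
  · exact and_or_left.mp (eq_or_of_sq_eq_cube_add h)
  · rintro (⟨rfl, rfl⟩ | ⟨rfl, rfl⟩) <;> norm_num
end
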